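/- Let n ≥ 2, 0 < α < 1, and let Ω ∈ L(log L)^{1/n'}(𝕊^{n−1}) have mean zero. Let n < p < n/α, 1/q = 1/p − α/n, and α − n/p < λ < 1 − n/p. Then there is C such that for all f ∈ C_c^∞(ℝ^n), (∫_{ℝ^n} (|x|^λ |T_{Ω,α}f(x)|)^q dx)^{1/q} ≤ C (∫_{ℝ^n} (|x|^λ |∇f(x)|)^p dx)^{1/p}. -/

import Mathlib

open MeasureTheory Metric Set Filter
open scoped ENNReal NNReal Topology

noncomputable section

abbrev Rn (n : ℕ) := EuclideanSpace ℝ (Fin n)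

/-- An axis-parallel half-open cube in `ℝⁿ`. -/
structure Cube (n : ℕ) where
  corner : Fin n → ℝ
  side : ℝ
  side_pos : 0 < side

/-- The set of points of a cube. -/
def Cube.carrier {n : ℕ} (Q : Cube n) : Set (Rn n) :=
  {x | ∀ i, Q.corner i ≤ x i ∧ x i < Q.corner i + Q.side}

/-- Surface measure on the unit sphere `𝕊^{n-1} ⊆ ℝⁿ`. -/
def sphereMeasure (n : ℕ) : Measure (Rn n) :=
  (MeasureTheory.Measure.hausdorffMeasure ((n : ℝ) - 1)).restrict (sphere (0 : Rn n) 1)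

/-- `f ∈ C_c^∞(ℝⁿ)`. -/
def IsCcSmooth {n : ℕ} (f : Rn n → ℝ) : Prop :=
  ContDiff ℝ (⊤ : ℕ∞) f ∧ HasCompactSupport f

/-- Truncated rough fractional singular integral. -/
def roughOpTrunc (n : ℕ) (α : ℝ) (Ω f : Rn n → ℝ) (x : Rn n) (ε : ℝ) : ℝ :=
  ∫ y in {y : Rn n | ε < ‖y‖}, (Ω (‖y‖⁻¹ • y) / ‖y‖ ^ ((n : ℝ) + 1 - α)) * f (x - y)

/-- The rough fractional singular integral `T_{Ω,α} f`, as a principal value. -/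
def roughOp (n : ℕ) (α : ℝ) (Ω f : Rn n → ℝ) (x : Rn n) : ℝ :=
  limUnder (𝓝[>] (0 : ℝ)) (roughOpTrunc n α Ω f x)

/-- Riesz potential (modulo its normalizing constant) of a nonnegative function. -/
def rieszPot (n : ℕ) (α : ℝ) (g : Rn n → ℝ) (x : Rn n) : ℝ≥0∞ :=
  ∫⁻ y, ENNReal.ofReal (g y) / ENNReal.ofReal (‖x - y‖ ^ ((n : ℝ) - α))

/-- `|∇f|`. -/
def gradNorm {n : ℕ} (f : Rn n → ℝ) (y : Rn n) : ℝ := ‖gradient f y‖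

/-- Weak Lorentz norm `‖Ω‖_{L^{r,∞}(𝕊^{n-1})}`. -/
def weakLorentzSphere (n : ℕ) (r : ℝ) (Ω : Rn n → ℝ) : ℝ≥0∞ :=
  ⨆ (t : ℝ) (_ : 0 < t), ENNReal.ofReal t * sphereMeasure n {y | t < |Ω y|} ^ (1 / r)

/-- Lorentz norm `‖Ω‖_{L^{r,q}(𝕊^{n-1})}`. -/
def lorentzSphere (n : ℕ) (r q : ℝ) (Ω : Rn n → ℝ) : ℝ≥0∞ :=
  (ENNReal.ofReal r *
      ∫⁻ t in Ioi (0 : ℝ),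
        ENNReal.ofReal t ^ q * sphereMeasure n {y | t < |Ω y|} ^ (q / r) / ENNReal.ofReal t) ^ (1 / q)

/-- The Young function `Φ(t) = t log(1+t)^{1/n'}`, `1/n' = (n-1)/n`. -/
def orliczYoung (n : ℕ) (t : ℝ) : ℝ := t * Real.log (1 + t) ^ (((n : ℝ) - 1) / n)

/-- Admissible Orlicz levels for the `L(log L)^{1/n'}` norm w.r.t. normalized surface measure. -/
def orliczSet (n : ℕ) (Ω : Rn n → ℝ) : Set ℝ :=
  {lam | 0 < lam ∧ ⨍ y, orliczYoung n (|Ω y| / lam) ∂sphereMeasure n ≤ 1}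

/-- Orlicz norm `‖Ω‖_{L(log L)^{1/n'}(𝕊^{n-1})}`. -/
def orliczSphereNorm (n : ℕ) (Ω : Rn n → ℝ) : ℝ := sInf (orliczSet n Ω)

/-- A sparse family of cubes. -/
def IsSparse {n : ℕ} (𝒮 : Set (Cube n)) : Prop :=
  ∃ E : Cube n → Set (Rn n),
    (∀ Q ∈ 𝒮, E Q ⊆ Q.carrier ∧ volume Q.carrier ≤ 2 * volume (E Q)) ∧
    𝒮.Pairwise fun Q P => Disjoint (E Q) (E P)

/-- A dyadic grid of cubes. -/
def IsDyadicGrid {n : ℕ} (𝒟 : Set (Cube n)) : Prop :=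
  (∀ Q ∈ 𝒟, ∃ k : ℤ, Q.side = (2 : ℝ) ^ k) ∧
  (∀ (k : ℤ) (x : Rn n), ∃! Q : Cube n, Q ∈ 𝒟 ∧ Q.side = (2 : ℝ) ^ k ∧ x ∈ Q.carrier) ∧
  (∀ Q ∈ 𝒟, ∀ P ∈ 𝒟, Disjoint Q.carrier P.carrier ∨ Q.carrier ⊆ P.carrier ∨ P.carrier ⊆ Q.carrier)

/-- The shifted dyadic grid `𝒟_t = {2^k([0,1)^n + m + (-1)^k t)}`. -/
def shiftedGrid (n : ℕ) (t : Fin n → ℝ) : Set (Cube n) :=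
  {Q | ∃ (k : ℤ) (m : Fin n → ℤ),
      Q.side = (2 : ℝ) ^ k ∧ Q.corner = fun i => (2 : ℝ) ^ k * ((m i : ℝ) + (-1 : ℝ) ^ k * t i)}

/-- `(⨍_Q |g|^s)^{1/s}` as an extended nonnegative real. -/
def avgLs (n : ℕ) (s : ℝ) (Q : Cube n) (g : Rn n → ℝ) : ℝ≥0∞ :=
  ((volume Q.carrier)⁻¹ * ∫⁻ y in Q.carrier, ENNReal.ofReal |g y| ^ s) ^ (1 / s)

/-- The `L^s` sparse (or dyadic) fractional operator `I^𝒮_{α,L^s}`. -/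
def sparseOpLs (n : ℕ) (α s : ℝ) (𝒮 : Set (Cube n)) (g : Rn n → ℝ) (x : Rn n) : ℝ≥0∞ :=
  ∑' Q : 𝒮, Set.indicator (Q : Cube n).carrier
      (fun _ => ENNReal.ofReal ((Q : Cube n).side ^ α) * avgLs n s (Q : Cube n) g) x

/-- The `L^s` fractional maximal operator `M_{α,L^s}`. -/
def maxOpLs (n : ℕ) (α s : ℝ) (g : Rn n → ℝ) (x : Rn n) : ℝ≥0∞ :=
  ⨆ (Q : Cube n) (_ : x ∈ Q.carrier), ENNReal.ofReal (Q.side ^ α) * avgLs n s Q g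

/-- The measure `w dx` associated with a weight `w`. -/
def wMeasure (n : ℕ) (w : Rn n → ℝ) : Measure (Rn n) :=
  volume.withDensity fun x => ENNReal.ofReal (w x)

/-- Muckenhoupt `A_∞` (via the standard fair-proportion characterization). -/
def IsAinfty {n : ℕ} (w : Rn n → ℝ) : Prop :=
  ∃ C > (0 : ℝ), ∃ δ > (0 : ℝ), ∀ Q : Cube n, ∀ S ⊆ Q.carrier, MeasurableSet S →
    wMeasure n w S ≤
      ENNReal.ofReal C * (volume S / volume Q.carrier) ^ δ * wMeasure n w Q.carrier

/-- `‖g‖_{L^p(w)}` for an `ℝ≥0∞`-valued `g`. -/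
def lpNormW (n : ℕ) (p : ℝ) (w : Rn n → ℝ) (g : Rn n → ℝ≥0∞) : ℝ≥0∞ :=
  (∫⁻ x, g x ^ p ∂wMeasure n w) ^ (1 / p)

/-- `‖g‖_{L^{p,∞}(w)}` for an `ℝ≥0∞`-valued `g`. -/
def weakNormW (n : ℕ) (p : ℝ) (w : Rn n → ℝ) (g : Rn n → ℝ≥0∞) : ℝ≥0∞ :=
  ⨆ (lam : ℝ) (_ : 0 < lam),
    ENNReal.ofReal lam * wMeasure n w {x | ENNReal.ofReal lam < g x} ^ (1 / p)

/-- Unweighted `L^p` "norm" of an `ℝ≥0∞`-valued function. -/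
def lqNorm (n : ℕ) (p : ℝ) (g : Rn n → ℝ≥0∞) : ℝ≥0∞ :=
  (∫⁻ x, g x ^ p) ^ (1 / p)

/-- Unweighted weak `L^p` norm of an `ℝ≥0∞`-valued function. -/
def weakNorm (n : ℕ) (p : ℝ) (g : Rn n → ℝ≥0∞) : ℝ≥0∞ :=
  ⨆ (lam : ℝ) (_ : 0 < lam),
    ENNReal.ofReal lam * volume {x | ENNReal.ofReal lam < g x} ^ (1 / p)

/-- Maximal function of a measure over cubes. -/
def measMax (n : ℕ) (μ : Measure (Rn n)) (x : Rn n) : ℝ≥0∞ :=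
  ⨆ (Q : Cube n) (_ : x ∈ Q.carrier), μ Q.carrier / volume Q.carrier

/-- The rough fractional maximal operator `M_{Ω,α}`. -/
def roughMax (n : ℕ) (α : ℝ) (Ω f : Rn n → ℝ) (x : Rn n) : ℝ≥0∞ :=
  ⨆ (t : ℝ) (_ : 0 < t),
    ENNReal.ofReal (t ^ (α - 1)) * ((volume (ball (0 : Rn n) t))⁻¹ *
      ∫⁻ y in ball (0 : Rn n) t, ENNReal.ofReal |Ω (‖y‖⁻¹ • y) * f (x - y)|)

/-- Average of `f` over the ball `B(x,t)`. -/
def ballAvg {n : ℕ} (f : Rn n → ℝ) (x : Rn n) (t : ℝ) : ℝ :=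
  ⨍ y in ball x t, f y

/-- The sharp rough fractional maximal operator `M^#_{Ω,α}`. -/
def roughMaxSharp (n : ℕ) (α : ℝ) (Ω f : Rn n → ℝ) (x : Rn n) : ℝ≥0∞ :=
  ⨆ (t : ℝ) (_ : 0 < t),
    ENNReal.ofReal (t ^ (α - 1)) * ((volume (ball (0 : Rn n) t))⁻¹ *
      ∫⁻ y in ball (0 : Rn n) t,
        ENNReal.ofReal (|Ω (‖y‖⁻¹ • y)| * |f (x - y) - ballAvg f x t|))

/-- The natural rough maximal operator `M^♮_Ω` (with `α = 1`). -/
def roughMaxNatural (n : ℕ) (Ω f : Rn n → ℝ) (x : Rn n) : ℝ≥0∞ :=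
  ⨆ (t : ℝ) (_ : 0 < t),
    ENNReal.ofReal |⨍ y in ball (0 : Rn n) t, Ω (‖y‖⁻¹ • y) * f (x - y)|

/-- The fractional spherical maximal operator `𝒮_β`. -/
def sphMax (n : ℕ) (β : ℝ) (f : Rn n → ℝ) (x : Rn n) : ℝ≥0∞ :=
  ⨆ (r : ℝ) (_ : 0 < r),
    ENNReal.ofReal (r ^ β) *
      ((MeasureTheory.Measure.hausdorffMeasure ((n : ℝ) - 1) (sphere x r))⁻¹ *
        ∫⁻ y in sphere x r, ENNReal.ofReal |f y|
          ∂(MeasureTheory.Measure.hausdorffMeasure ((n : ℝ) - 1)))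


/-- The measure `w^q dx`. -/
def wqMeasure (n : ℕ) (q : ℝ) (w : Rn n → ℝ) : Measure (Rn n) :=
  volume.withDensity fun x => ENNReal.ofReal (w x) ^ q

/-- Weak norm `‖g‖_{L^{q,∞}(w^q)}` for `ℝ≥0∞`-valued `g`. -/
def weakNormWq (n : ℕ) (q : ℝ) (w : Rn n → ℝ) (g : Rn n → ℝ≥0∞) : ℝ≥0∞ :=
  ⨆ (lam : ℝ) (_ : 0 < lam),
    ENNReal.ofReal lam * wqMeasure n q w {x | ENNReal.ofReal lam < g x} ^ (1 / q)

/-!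
The mean condition turns the principal value into the absolutely convergent integral
`T f(x) = ∫ Ω(y/|y|) |y|^{-(n+1-α)} (f(x - y) - f(x)) dy`. Fix `s ∈ (n, p)`. Morrey's inequality
`|f(x - y) - f(x)| ≲ |y| (⨍_{B(x,|y|)} |∇f|^s)^{1/s}` and polar coordinates give
`|T f(x)| ≲ ‖Ω‖_{L¹} ∫₀^∞ r^{α-1} (⨍_{B(x,r)} |∇f|^s)^{1/s} dr`, and it remains to bound this
potential, which is free of `Ω`, from `L^p` to `L^q` with the weight `|x|^λ`.

For `r ≤ |x|/2` the weight is comparable to a constant on `B(x, r)`, and Hedberg's argument reduces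
the claim to the Hardy-Littlewood maximal theorem in `L^{p/s}`. For `r > |x|/2` the ball `B(x, r)`
lies in `B(0, 3r)`; Hölder's inequality against the weight costs a power of `r`, and since `s` is
close to `n` there is room for an extra factor `(|w|/r)^δ`, which makes the remaining Hardy-type
double integral converge after Tonelli.

The kernel is integrated in polar coordinates against `Measure.toSphere`, while the hypotheses on
`Ω` concern Hausdorff measure on the sphere. Both are uniformly distributed, that is, they give
balls of equal radius equal mass, and two such measures are proportional.
-/

section UniformlyDistributed

variable {X : Type*} [MetricSpace X] [MeasurableSpace X]

/-- A Borel measure on a metric space is uniformly distributed if the measure of a ball depends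
only on its radius. -/
def IsUniformlyDistributed (μ : Measure X) : Prop :=
  ∀ x y r, μ (ball x r) = μ (ball y r)

theorem IsUniformlyDistributed.measure_ball_ne_zero [CompactSpace X] {μ : Measure X}
    [NeZero μ] (hμ : IsUniformlyDistributed μ) (x : X) {r : ℝ} (hr : 0 < r) : μ (ball x r) ≠ 0 := by
  intro hball
  obtain ⟨t, -, htfin, htcover⟩ := finite_cover_balls_of_compact (isCompact_univ (X := X)) hr
  refine NeZero.ne (μ univ) (measure_mono_null htcover ?_)
  exact (measure_biUnion_null_iff htfin.countable).2 fun y _ => hμ y x r ▸ hball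

variable [BorelSpace X] {μ ν : Measure X}

section

variable [SecondCountableTopology X]

theorem IsUniformlyDistributed.lintegral_measure_inter_ball [SFinite μ] [SFinite ν]
    (hν : IsUniformlyDistributed ν) {A : Set X} (hA : MeasurableSet A) (x₀ : X) (r : ℝ) :
    ∫⁻ y, μ (A ∩ ball y r) ∂ν = ν (ball x₀ r) * μ A := by
  have hmeas : MeasurableSet {z : X × X | z.1 ∈ A ∧ dist z.1 z.2 < r} :=
    (hA.preimage measurable_fst).inter (isOpen_lt continuous_dist continuous_const).measurableSet
  have hslice (x : X) : ν (Prod.mk x ⁻¹' {z : X × X | z.1 ∈ A ∧ dist z.1 z.2 < r})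
      = A.indicator (fun _ => ν (ball x₀ r)) x := by
    by_cases hx : x ∈ A
    · rw [indicator_of_mem hx, ← hν x x₀ r]
      congr 1
      ext y
      simp [hx, dist_comm]
    · simp [hx]
  calc ∫⁻ y, μ (A ∩ ball y r) ∂ν
      = (μ.prod ν) {z : X × X | z.1 ∈ A ∧ dist z.1 z.2 < r} :=
        (Measure.prod_apply_symm hmeas).symm
    _ = ν (ball x₀ r) * μ A := by
        rw [Measure.prod_apply hmeas]
        simp only [hslice]
        rw [lintegral_indicator hA, setLIntegral_const]

theorem IsUniformlyDistributed.mul_measure_le_thickening [SFinite μ] [SFinite ν]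
    (hμ : IsUniformlyDistributed μ) (hν : IsUniformlyDistributed ν) {K : Set X}
    (hK : IsClosed K) (x : X) (r : ℝ) :
    ν (ball x r) * μ K ≤ μ (ball x r) * ν (thickening r K) := by
  rw [← hν.lintegral_measure_inter_ball hK.measurableSet, ← setLIntegral_const,
    ← lintegral_indicator isOpen_thickening.measurableSet]
  refine lintegral_mono fun y => ?_
  by_cases hy : y ∈ thickening r K
  · rw [indicator_of_mem hy, hμ x y r]
    exact measure_mono inter_subset_right
  · have hdisj : K ∩ ball y r = ∅ := by
      refine eq_empty_of_forall_notMem fun z hz => hy (mem_thickening_iff.2 ⟨z, hz.1, ?_⟩)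
      exact dist_comm y z ▸ hz.2
    simp [hdisj]

end

variable [CompactSpace X] [IsFiniteMeasure μ] [IsFiniteMeasure ν]

theorem IsUniformlyDistributed.measure_mul_univ_le [NeZero μ] (hμ : IsUniformlyDistributed μ)
    (hν : IsUniformlyDistributed ν) {K : Set X} (hK : IsClosed K) :
    μ K * ν univ ≤ μ univ * ν K := by
  obtain ⟨x⟩ : Nonempty X := μ.nonempty_of_neZero
  have hthick {r : ℝ} (hr : 0 < r) : μ K * ν univ ≤ μ univ * ν (thickening r K) := by
    have htotal : μ (ball x r) * ν univ = ν (ball x r) * μ univ := by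
      simpa [← hμ x _ r, mul_comm] using
        hν.lintegral_measure_inter_ball (μ := μ) MeasurableSet.univ x r
    rw [← ENNReal.mul_le_mul_iff_right (hμ.measure_ball_ne_zero x hr) (measure_ne_top _ _)]
    calc μ (ball x r) * (μ K * ν univ) = (ν (ball x r) * μ K) * μ univ := by
          rw [mul_left_comm, htotal]; ring
      _ ≤ (μ (ball x r) * ν (thickening r K)) * μ univ := by
          exact mul_le_mul_left (hμ.mul_measure_le_thickening hν hK x r) _
      _ = μ (ball x r) * (μ univ * ν (thickening r K)) := by ring
  have hlim := ENNReal.Tendsto.const_mul (a := μ univ)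
    (tendsto_measure_thickening_of_isClosed ⟨1, one_pos, measure_ne_top ν _⟩ hK)
    (Or.inr (measure_ne_top _ _))
  exact ge_of_tendsto hlim (eventually_mem_nhdsWithin.mono fun r hr => hthick hr)

theorem IsUniformlyDistributed.eq_smul [NeZero μ] [NeZero ν] (hμ : IsUniformlyDistributed μ)
    (hν : IsUniformlyDistributed ν) : μ = (μ univ / ν univ) • ν := by
  have hclosed {K : Set X} (hK : IsClosed K) : μ K = ((μ univ / ν univ) • ν) K := by
    have h : μ K * ν univ = μ univ * ν K :=
      (hμ.measure_mul_univ_le hν hK).antisymm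
        (by simpa only [mul_comm] using hν.measure_mul_univ_le hμ hK)
    rw [Measure.smul_apply, smul_eq_mul, ENNReal.mul_comm_div, ← mul_div_assoc, ← h,
      ENNReal.mul_div_cancel_right (NeZero.ne _) (measure_ne_top _ _)]
  refine ext_of_generate_finite {s | IsClosed s} ?_ isPiSystem_isClosed (fun _ => hclosed)
    (hclosed isClosed_univ)
  rw [← borel_eq_generateFrom_isClosed]
  exact BorelSpace.measurable_eq

end UniformlyDistributed

section SphereMeasure

open Module Submodule
open scoped Pointwise

variable {E : Type*} [NormedAddCommGroup E] [InnerProductSpace ℝ E]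

theorem image_coe_ball_sphere_of_map_eq {L : E ≃ₗᵢ[ℝ] E} {x y : sphere (0 : E) 1}
    (hxy : L x = y) (r : ℝ) :
    L '' (Subtype.val '' ball x r) = Subtype.val '' ball y r := by
  have hball (z : sphere (0 : E) 1) :
      Subtype.val '' ball z r = {w : E | ‖w‖ = 1 ∧ dist w z < r} := by
    ext w
    refine ⟨?_, fun hw => ⟨⟨w, mem_sphere_zero_iff_norm.2 hw.1⟩, hw.2, rfl⟩⟩
    rintro ⟨u, hu, rfl⟩
    exact ⟨norm_eq_of_mem_sphere u, hu⟩
  rw [hball, hball, LinearIsometryEquiv.image_eq_preimage_symm]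
  ext w
  simp only [mem_preimage, mem_ofPred_eq, LinearIsometryEquiv.norm_map]
  rw [← L.dist_map, L.apply_symm_apply, hxy]

theorem exists_linearIsometryEquiv_map_sphere (x y : sphere (0 : E) 1) :
    ∃ L : E ≃ₗᵢ[ℝ] E, L x = y :=
  ⟨(span ℝ {(x : E) - y})ᗮ.reflection,
    reflection_sub (by rw [norm_eq_of_mem_sphere, norm_eq_of_mem_sphere])⟩

theorem ball_subset_image_orthogonalProjectionOnto_sphere {v : E} (hv : ‖v‖ = 1) :
    ball 0 1 ⊆ (span ℝ {v})ᗮ.orthogonalProjectionOnto '' sphere (0 : E) 1 := by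
  intro w hw
  have hw1 : ‖(w : E)‖ < 1 := by simpa using hw
  have hort : inner ℝ (w : E) v = 0 := mem_orthogonal_singleton_iff_inner_left.1 w.2
  refine ⟨(w : E) + √(1 - ‖(w : E)‖ ^ 2) • v, ?_, ?_⟩
  · have hsq : ‖(w : E) + √(1 - ‖(w : E)‖ ^ 2) • v‖ ^ 2 = 1 := by
      rw [norm_add_sq_real, inner_smul_right, hort, norm_smul, hv, mul_one, Real.norm_eq_abs,
        sq_abs, Real.sq_sqrt (by nlinarith [norm_nonneg (w : E)])]
      ring
    rwa [mem_sphere_zero_iff_norm, ← pow_eq_one_iff_of_nonneg (norm_nonneg _) two_ne_zero]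
  · have hpv : (span ℝ {v})ᗮ.orthogonalProjectionOnto v = 0 :=
      orthogonalProjectionOnto_orthogonal_apply_eq_zero (mem_span_singleton_self v)
    simp [hpv]

theorem isUniformlyDistributed_hausdorffMeasure_sphere [MeasurableSpace E] [BorelSpace E] {d : ℝ}
    (hd : 0 ≤ d) : IsUniformlyDistributed (μH[d] : Measure (sphere (0 : E) 1)) := by
  intro x y r
  obtain ⟨L, hL⟩ := exists_linearIsometryEquiv_map_sphere x y
  have hcoe (A : Set (sphere (0 : E) 1)) : μH[d] A = μH[d] (Subtype.val '' A) :=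
    (isometry_subtype_coe.hausdorffMeasure_image (Or.inl hd) A).symm
  rw [hcoe, hcoe, ← image_coe_ball_sphere_of_map_eq hL]
  exact (L.toIsometryEquiv.hausdorffMeasure_image _ _).symm

variable [FiniteDimensional ℝ E]

theorem isUniformlyDistributed_toSphere [MeasurableSpace E] [BorelSpace E] :
    IsUniformlyDistributed (volume : Measure E).toSphere := by
  intro x y r
  obtain ⟨L, hL⟩ := exists_linearIsometryEquiv_map_sphere x y
  have hcone (A : Set E) : Ioo (0 : ℝ) 1 • (L '' A) = L '' (Ioo (0 : ℝ) 1 • A) :=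
    (image_image2_distrib_right (map_smul L)).symm
  rw [Measure.toSphere_apply' _ measurableSet_ball, Measure.toSphere_apply' _ measurableSet_ball,
    ← image_coe_ball_sphere_of_map_eq hL, hcone]
  congr 1
  rw [LinearIsometryEquiv.image_eq_preimage_symm]
  exact (L.symm.measurePreserving.measure_preimage_equiv (f := L.symm.toMeasurableEquiv) _).symm

theorem finrank_orthogonal_span_singleton_eq_sub_one {v : E} (hv : v ≠ 0) :
    (finrank ℝ (span ℝ {v})ᗮ : ℝ) = finrank ℝ E - 1 := by
  rw [← finrank_add_finrank_orthogonal (span ℝ {v}), finrank_span_singleton hv]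
  push_cast
  ring

variable [MeasurableSpace E] [BorelSpace E]

theorem hausdorffMeasure_hemisphere_lt_top {v : E} (hv : ‖v‖ = 1) :
    μH[finrank ℝ E - 1] {x : E | ‖x‖ = 1 ∧ inner ℝ v x ≤ 0} < ∞ := by
  have hv0 : v ≠ 0 := norm_ne_zero_iff.1 (hv ▸ one_ne_zero)
  rw [← finrank_orthogonal_span_singleton_eq_sub_one hv0]
  set H := (span ℝ {v})ᗮ
  obtain ⟨K, hK⟩ : ∃ K, LipschitzOnWith K (fun w : H => stereoInvFunAux v (w : E))
      (closedBall 0 2) :=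
    (contDiff_stereoInvFunAux.comp H.subtypeL.contDiff).contDiffOn.exists_lipschitzOnWith
      one_ne_zero (convex_closedBall _ _) (isCompact_closedBall _ _)
  refine (measure_mono ?_).trans_lt ((hK.hausdorffMeasure_image_le (Nat.cast_nonneg _)).trans_lt
    (ENNReal.mul_lt_top (ENNReal.rpow_lt_top_of_nonneg (Nat.cast_nonneg _) ENNReal.coe_ne_top)
      (isCompact_closedBall _ _).measure_lt_top))
  rintro x ⟨hx, hvx⟩
  refine ⟨stereoToFun v x, ?_, ?_⟩
  · have hproj : ‖H.orthogonalProjectionOnto x‖ ≤ 1 :=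
      hx ▸ norm_orthogonalProjectionOnto_apply_le _ _
    have hscale : ‖2 / (1 - inner ℝ v x)‖ ≤ 2 := by
      rw [Real.norm_of_nonneg (by apply div_nonneg <;> linarith), div_le_iff₀ (by linarith)]
      linarith
    rw [mem_closedBall_zero_iff, stereoToFun_apply, norm_smul, innerSL_apply_apply]
    exact (mul_le_mul hscale hproj (norm_nonneg _) zero_le_two).trans_eq (mul_one 2)
  · have hxv : x ≠ v := by
      rintro rfl
      rw [real_inner_self_eq_norm_sq, hv] at hvx
      norm_num at hvx
    exact congrArg Subtype.val
      (stereo_left_inv hv (x := ⟨x, mem_sphere_zero_iff_norm.2 hx⟩) hxv)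

variable [Nontrivial E]

theorem hausdorffMeasure_sphere_lt_top : μH[finrank ℝ E - 1] (sphere (0 : E) 1) < ∞ := by
  obtain ⟨v, hv⟩ := exists_norm_eq E zero_le_one
  refine (measure_mono fun x hx => ?_).trans_lt (measure_union_lt_top
    (hausdorffMeasure_hemisphere_lt_top hv)
    (hausdorffMeasure_hemisphere_lt_top ((norm_neg v).trans hv)))
  have hx1 := mem_sphere_zero_iff_norm.1 hx
  rcases le_total (inner ℝ v x) 0 with h | h
  · exact Or.inl ⟨hx1, h⟩
  · exact Or.inr ⟨hx1, by rwa [inner_neg_left, neg_nonpos]⟩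

theorem hausdorffMeasure_sphere_pos : 0 < μH[finrank ℝ E - 1] (sphere (0 : E) 1) := by
  obtain ⟨v, hv⟩ := exists_norm_eq E zero_le_one
  have hv0 : v ≠ 0 := norm_ne_zero_iff.1 (hv ▸ one_ne_zero)
  rw [← finrank_orthogonal_span_singleton_eq_sub_one hv0]
  set H := (span ℝ {v})ᗮ
  have hlip : LipschitzWith 1 H.orthogonalProjectionOnto :=
    LipschitzWith.of_dist_le_mul fun x y => by
      rw [dist_eq_norm, dist_eq_norm, ← map_sub]
      simpa using norm_orthogonalProjectionOnto_apply_le H (x - y)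
  calc 0 < μH[finrank ℝ H] (ball (0 : H) 1) := measure_ball_pos _ _ one_pos
    _ ≤ μH[finrank ℝ H] (H.orthogonalProjectionOnto '' sphere (0 : E) 1) :=
        measure_mono (ball_subset_image_orthogonalProjectionOnto_sphere hv)
    _ ≤ μH[finrank ℝ H] (sphere (0 : E) 1) := by
        simpa using hlip.hausdorffMeasure_image_le (Nat.cast_nonneg _) (sphere (0 : E) 1)

theorem exists_map_coe_toSphere_eq_smul_hausdorffMeasure :
    ∃ c : ℝ≥0∞, c ≠ ∞ ∧ (volume : Measure E).toSphere.map Subtype.val =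
      c • μH[finrank ℝ E - 1].restrict (sphere (0 : E) 1) := by
  have hd : (0 : ℝ) ≤ finrank ℝ E - 1 := by
    rw [sub_nonneg, Nat.one_le_cast]
    exact finrank_pos
  let ν : Measure (sphere (0 : E) 1) := μH[finrank ℝ E - 1]
  have hν : ν univ = μH[finrank ℝ E - 1] (sphere (0 : E) 1) := by
    rw [← isometry_subtype_coe.hausdorffMeasure_image (Or.inl hd), image_univ, Subtype.range_coe]
  have : IsFiniteMeasure ν := ⟨hν ▸ hausdorffMeasure_sphere_lt_top⟩
  have : NeZero ν := ⟨Measure.measure_univ_ne_zero.1 (hν ▸ hausdorffMeasure_sphere_pos.ne')⟩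
  have : NeZero (volume : Measure E).toSphere := ⟨Measure.toSphere_ne_zero _⟩
  refine ⟨(volume : Measure E).toSphere univ / ν univ,
    ENNReal.div_ne_top (measure_ne_top _ _) (NeZero.ne _), ?_⟩
  conv_lhs => rw [isUniformlyDistributed_toSphere.eq_smul
    (isUniformlyDistributed_hausdorffMeasure_sphere hd : IsUniformlyDistributed ν)]
  rw [Measure.map_smul, isometry_subtype_coe.map_hausdorffMeasure (Or.inl hd), Subtype.range_coe]

end SphereMeasure

section PowerIntegrals

theorem setLIntegral_Ioc_rpow {a : ℝ} (ha : 0 < a) {R : ℝ} (hR : 0 ≤ R) :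
    ∫⁻ t in Ioc 0 R, ENNReal.ofReal t ^ (a - 1) = ENNReal.ofReal a⁻¹ * ENNReal.ofReal R ^ a := by
  have hint : IntegrableOn (fun t : ℝ => t ^ (a - 1)) (Ioc 0 R) :=
    (intervalIntegrable_iff_integrableOn_Ioc_of_le hR).1
      (intervalIntegral.intervalIntegrable_rpow' (by linarith))
  have hnonneg : 0 ≤ᵐ[volume.restrict (Ioc 0 R)] fun t : ℝ => t ^ (a - 1) :=
    (ae_restrict_mem measurableSet_Ioc).mono fun t ht => Real.rpow_nonneg ht.1.le _
  rw [setLIntegral_congr_fun measurableSet_Ioc fun t ht => ENNReal.ofReal_rpow_of_pos ht.1,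
    ← ofReal_integral_eq_lintegral_ofReal hint hnonneg, ← intervalIntegral.integral_of_le hR,
    integral_rpow (Or.inl (by linarith)), ENNReal.ofReal_rpow_of_nonneg hR ha.le,
    ← ENNReal.ofReal_mul (by positivity), sub_add_cancel, Real.zero_rpow ha.ne', sub_zero,
    div_eq_inv_mul]

theorem setLIntegral_Ioi_rpow {a : ℝ} (ha : 0 < a) {R : ℝ} (hR : 0 < R) :
    ∫⁻ t in Ioi R, ENNReal.ofReal t ^ (-a - 1) =
      ENNReal.ofReal a⁻¹ * ENNReal.ofReal R ^ (-a) := by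
  have hint : IntegrableOn (fun t : ℝ => t ^ (-a - 1)) (Ioi R) :=
    integrableOn_Ioi_rpow_of_lt (by linarith) hR
  have hnonneg : 0 ≤ᵐ[volume.restrict (Ioi R)] fun t : ℝ => t ^ (-a - 1) :=
    (ae_restrict_mem measurableSet_Ioi).mono fun t ht => Real.rpow_nonneg (hR.trans ht).le _
  rw [setLIntegral_congr_fun measurableSet_Ioi fun t ht =>
      ENNReal.ofReal_rpow_of_pos (hR.trans ht),
    ← ofReal_integral_eq_lintegral_ofReal hint hnonneg, integral_Ioi_rpow_of_lt (by linarith) hR,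
    ENNReal.ofReal_rpow_of_pos hR, ← ENNReal.ofReal_mul (by positivity), sub_add_cancel,
    neg_div_neg_eq, div_eq_inv_mul]

theorem setLIntegral_rpow_ofReal_lt_ofReal {a : ℝ} (ha : 0 < a) {R : ℝ} (hR : 0 ≤ R) :
    ∫⁻ t in {t : ℝ | 0 < t ∧ ENNReal.ofReal t < ENNReal.ofReal R}, ENNReal.ofReal t ^ (a - 1) =
      ENNReal.ofReal a⁻¹ * ENNReal.ofReal R ^ a := by
  have hset : {t : ℝ | 0 < t ∧ ENNReal.ofReal t < ENNReal.ofReal R} = Ioo 0 R :=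
    ext fun t => and_congr_right fun ht => ENNReal.ofReal_lt_ofReal_iff_of_nonneg ht.le
  rw [hset, setLIntegral_congr Ioo_ae_eq_Ioc, setLIntegral_Ioc_rpow ha hR]

theorem setLIntegral_rpow_ofReal_lt {a : ℝ} (ha : 0 < a) (c : ℝ≥0∞) :
    ∫⁻ t in {t : ℝ | 0 < t ∧ ENNReal.ofReal t < c}, ENNReal.ofReal t ^ (a - 1) =
      ENNReal.ofReal a⁻¹ * c ^ a := by
  induction c with
  | coe c => rw [← ENNReal.ofReal_coe_nnreal, setLIntegral_rpow_ofReal_lt_ofReal ha c.coe_nonneg]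
  | top =>
    rw [ENNReal.top_rpow_of_pos ha, ENNReal.mul_top (by simpa using ha)]
    refine ENNReal.eq_top_of_forall_nnreal_le fun b => ?_
    have hR : 0 ≤ (a * b) ^ a⁻¹ := by positivity
    calc (b : ℝ≥0∞) = ENNReal.ofReal a⁻¹ * ENNReal.ofReal ((a * b) ^ a⁻¹) ^ a := by
          rw [ENNReal.ofReal_rpow_of_nonneg hR ha.le, ← ENNReal.ofReal_mul (by positivity),
            Real.rpow_inv_rpow (by positivity) ha.ne', inv_mul_cancel_left₀ ha.ne',
            ENNReal.ofReal_coe_nnreal]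
      _ ≤ _ := by
          rw [← setLIntegral_rpow_ofReal_lt_ofReal ha hR]
          exact lintegral_mono_set fun t ht => ⟨ht.1, ENNReal.ofReal_lt_top⟩

end PowerIntegrals

section PolarCoordinates

open Module

theorem lintegral_volumeIoiPow (m : ℕ) {G : ℝ → ℝ≥0∞} (hG : Measurable G) :
    ∫⁻ r : Ioi (0 : ℝ), G r ∂Measure.volumeIoiPow m =
      ∫⁻ r in Ioi (0 : ℝ), ENNReal.ofReal (r ^ m) * G r := by
  rw [Measure.volumeIoiPow, lintegral_withDensity_eq_lintegral_mul _ (by fun_prop) (by fun_prop)]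
  exact lintegral_subtype_comap measurableSet_Ioi fun r => ENNReal.ofReal (r ^ m) * G r

variable {E : Type*} [NormedAddCommGroup E] [NormedSpace ℝ E] [FiniteDimensional ℝ E]
  [MeasurableSpace E] [BorelSpace E] [Nontrivial E] (μ : Measure E) [μ.IsAddHaarMeasure]

theorem lintegral_fun_direction_mul_fun_norm {Φ : E → ℝ≥0∞} (hΦ : Measurable Φ) {G : ℝ → ℝ≥0∞}
    (hG : Measurable G) :
    ∫⁻ y, Φ (‖y‖⁻¹ • y) * G ‖y‖ ∂μ = (∫⁻ θ : sphere (0 : E) 1, Φ θ ∂μ.toSphere) *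
      ∫⁻ r in Ioi (0 : ℝ), ENNReal.ofReal r ^ (finrank ℝ E - 1 : ℝ) * G r := by
  calc ∫⁻ y, Φ (‖y‖⁻¹ • y) * G ‖y‖ ∂μ
      = ∫⁻ y : ({0}ᶜ : Set E), Φ (‖(y : E)‖⁻¹ • (y : E)) * G ‖(y : E)‖ ∂μ.comap Subtype.val := by
        rw [lintegral_subtype_comap (measurableSet_singleton _).compl
          fun y : E => Φ (‖y‖⁻¹ • y) * G ‖y‖, restrict_compl_singleton]
    _ = ∫⁻ z : sphere (0 : E) 1 × Ioi (0 : ℝ), Φ z.1 * G z.2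
          ∂μ.toSphere.prod (.volumeIoiPow (finrank ℝ E - 1)) := by
        simp [← μ.measurePreserving_homeomorphUnitSphereProd.lintegral_comp
          (f := fun z : sphere (0 : E) 1 × Ioi (0 : ℝ) => Φ z.1 * G z.2) (by fun_prop)]
    _ = (∫⁻ θ : sphere (0 : E) 1, Φ θ ∂μ.toSphere) *
          ∫⁻ r in Ioi (0 : ℝ), ENNReal.ofReal (r ^ (finrank ℝ E - 1)) * G r := by
        rw [lintegral_prod_mul (f := fun θ : sphere (0 : E) 1 => Φ θ)
          (g := fun r : Ioi (0 : ℝ) => G r) (by fun_prop) (by fun_prop),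
          lintegral_volumeIoiPow _ hG]
    _ = _ := by
        congr 1
        refine setLIntegral_congr_fun measurableSet_Ioi fun r (hr : 0 < r) => ?_
        rw [ENNReal.ofReal_pow hr.le, ← ENNReal.rpow_natCast, Nat.cast_pred finrank_pos]

theorem integral_fun_direction_mul_fun_norm (Φ : E → ℝ) (G : ℝ → ℝ) :
    ∫ y, Φ (‖y‖⁻¹ • y) * G ‖y‖ ∂μ = (∫ θ : sphere (0 : E) 1, Φ θ ∂μ.toSphere) *
      ∫ r : Ioi (0 : ℝ), G r ∂Measure.volumeIoiPow (finrank ℝ E - 1) := by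
  calc ∫ y, Φ (‖y‖⁻¹ • y) * G ‖y‖ ∂μ
      = ∫ y : ({0}ᶜ : Set E), Φ (‖(y : E)‖⁻¹ • (y : E)) * G ‖(y : E)‖ ∂μ.comap Subtype.val := by
        rw [integral_subtype_comap (measurableSet_singleton _).compl
          fun y : E => Φ (‖y‖⁻¹ • y) * G ‖y‖, restrict_compl_singleton]
    _ = ∫ z : sphere (0 : E) 1 × Ioi (0 : ℝ), Φ z.1 * G z.2
          ∂μ.toSphere.prod (.volumeIoiPow (finrank ℝ E - 1)) := by
        simp [← μ.measurePreserving_homeomorphUnitSphereProd.integral_comp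
          (Homeomorph.measurableEmbedding _)
          fun z : sphere (0 : E) 1 × Ioi (0 : ℝ) => Φ z.1 * G z.2]
    _ = _ := integral_prod_mul (fun θ : sphere (0 : E) 1 => Φ θ) fun r : Ioi (0 : ℝ) => G r

end PolarCoordinates

section RoughKernel

open Module

theorem measurableSet_lt_norm {E : Type*} [NormedAddCommGroup E] [MeasurableSpace E]
    [OpensMeasurableSpace E] (ε : ℝ) : MeasurableSet {y : E | ε < ‖y‖} :=
  (isOpen_lt continuous_const continuous_norm).measurableSet

variable {E : Type*} [NormedAddCommGroup E] [NormedSpace ℝ E]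

/-- The homogeneous kernel `Ω(y/|y|) |y|^{-β}` of degree `-β` with rough angular part `Ω`. -/
def roughKernel (Ω : E → ℝ) (β : ℝ) (y : E) : ℝ :=
  Ω (‖y‖⁻¹ • y) / ‖y‖ ^ β

theorem enorm_roughKernel (Ω : E → ℝ) (β : ℝ) {y : E} (hy : y ≠ 0) :
    ‖roughKernel Ω β y‖ₑ = ‖Ω (‖y‖⁻¹ • y)‖ₑ * ENNReal.ofReal ‖y‖ ^ (-β) := by
  have hy0 : 0 < ‖y‖ := norm_pos_iff.2 hy
  rw [roughKernel, div_eq_mul_inv, enorm_mul, ← Real.rpow_neg hy0.le,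
    ENNReal.ofReal_rpow_of_pos hy0, Real.enorm_of_nonneg (Real.rpow_nonneg hy0.le _)]

variable [MeasurableSpace E] [BorelSpace E] [FiniteDimensional ℝ E] {Ω : E → ℝ}

theorem measurable_roughKernel (hΩ : Measurable Ω) (β : ℝ) : Measurable (roughKernel Ω β) :=
  (hΩ.comp (by fun_prop)).div (by fun_prop)

variable [Nontrivial E] {μ : Measure E} [μ.IsAddHaarMeasure] {β : ℝ}

theorem lintegral_enorm_roughKernel_mul (hΩ : Measurable Ω) {G : ℝ → ℝ≥0∞} (hG : Measurable G) :
    ∫⁻ y, ‖roughKernel Ω β y‖ₑ * G ‖y‖ ∂μ = (∫⁻ θ : sphere (0 : E) 1, ‖Ω θ‖ₑ ∂μ.toSphere) *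
      ∫⁻ r in Ioi (0 : ℝ), ENNReal.ofReal r ^ (finrank ℝ E - 1 - β) * G r := by
  calc ∫⁻ y, ‖roughKernel Ω β y‖ₑ * G ‖y‖ ∂μ
      = ∫⁻ y, ‖Ω (‖y‖⁻¹ • y)‖ₑ * (ENNReal.ofReal ‖y‖ ^ (-β) * G ‖y‖) ∂μ := by
        refine lintegral_congr_ae ((Measure.ae_ne μ 0).mono fun y hy => ?_)
        simp only [enorm_roughKernel Ω β hy, mul_assoc]
    _ = _ := by
        rw [lintegral_fun_direction_mul_fun_norm μ hΩ.enorm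
          (G := fun r => ENNReal.ofReal r ^ (-β) * G r) (by fun_prop)]
        congr 1
        refine setLIntegral_congr_fun measurableSet_Ioi fun r (hr : 0 < r) => ?_
        rw [← mul_assoc, ← ENNReal.rpow_add _ _ (by simpa using hr) ENNReal.ofReal_ne_top,
          sub_eq_add_neg _ β]

variable {F : Type*} [NormedAddCommGroup F] [NormedSpace ℝ F]

theorem integrable_roughKernel_smul (hΩ : Measurable Ω)
    (hΩint : Integrable (fun θ : sphere (0 : E) 1 => Ω θ) μ.toSphere) {g : E → F}
    (hg : AEStronglyMeasurable g μ) {G : ℝ → ℝ≥0∞} (hG : Measurable G)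
    (hgG : ∀ y, ‖g y‖ₑ ≤ G ‖y‖)
    (hGfin : ∫⁻ r in Ioi (0 : ℝ), ENNReal.ofReal r ^ (finrank ℝ E - 1 - β) * G r < ∞) :
    Integrable (fun y => roughKernel Ω β y • g y) μ := by
  refine ⟨(measurable_roughKernel hΩ β).aestronglyMeasurable.smul hg, ?_⟩
  calc ∫⁻ y, ‖roughKernel Ω β y • g y‖ₑ ∂μ ≤ ∫⁻ y, ‖roughKernel Ω β y‖ₑ * G ‖y‖ ∂μ := by
        refine lintegral_mono fun y => ?_
        rw [enorm_smul]
        gcongr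
        exact hgG y
    _ < ∞ := by
        rw [lintegral_enorm_roughKernel_mul hΩ hG]
        exact ENNReal.mul_lt_top hΩint.2 hGfin

theorem integrableOn_roughKernel (hΩ : Measurable Ω)
    (hΩint : Integrable (fun θ : sphere (0 : E) 1 => Ω θ) μ.toSphere) (hβ : finrank ℝ E < β)
    {ε : ℝ} (hε : 0 < ε) : IntegrableOn (roughKernel Ω β) {y | ε < ‖y‖} μ := by
  rw [← integrable_indicator_iff (measurableSet_lt_norm ε)]
  refine (integrable_roughKernel_smul (β := β) hΩ hΩint
    (g := {y | ε < ‖y‖}.indicator fun _ => (1 : ℝ))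
    (stronglyMeasurable_const.indicator (measurableSet_lt_norm ε)).aestronglyMeasurable
    (G := (Ioi ε).indicator 1) (measurable_one.indicator measurableSet_Ioi)
    (fun y => ?_) ?_).congr (.of_forall fun y => ?_)
  · by_cases hy : ε < ‖y‖ <;> simp [hy]
  · calc ∫⁻ r in Ioi (0 : ℝ), ENNReal.ofReal r ^ (finrank ℝ E - 1 - β) * (Ioi ε).indicator 1 r
        ≤ ∫⁻ r in Ioi ε, ENNReal.ofReal r ^ (-(β - finrank ℝ E) - 1) := by
          rw [← lintegral_indicator measurableSet_Ioi (μ := volume) (s := Ioi ε)]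
          refine (setLIntegral_le_lintegral _ _).trans_eq (lintegral_congr fun r => ?_)
          by_cases hr : ε < r <;> simp [hr]
          ring_nf
      _ < ∞ := by
          rw [setLIntegral_Ioi_rpow (sub_pos.2 hβ) hε]
          exact ENNReal.mul_lt_top ENNReal.ofReal_lt_top
            (ENNReal.rpow_ne_top_of_ne_zero (by simpa using hε) ENNReal.ofReal_ne_top).lt_top
  · by_cases hy : ε < ‖y‖ <;> simp [hy]

theorem setIntegral_roughKernel_eq_zero (hΩmean : ∫ θ : sphere (0 : E) 1, Ω θ ∂μ.toSphere = 0)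
    (β ε : ℝ) : ∫ y in {y | ε < ‖y‖}, roughKernel Ω β y ∂μ = 0 := by
  have hpolar := integral_fun_direction_mul_fun_norm μ Ω ((Ioi ε).indicator fun r => (r ^ β)⁻¹)
  rw [hΩmean, zero_mul] at hpolar
  rw [← integral_indicator (measurableSet_lt_norm ε), ← hpolar]
  congr with y
  by_cases hy : ε < ‖y‖ <;> simp [hy, roughKernel, div_eq_mul_inv]

theorem setIntegral_roughKernel_smul_sub [CompleteSpace F] (hΩ : Measurable Ω)
    (hΩint : Integrable (fun θ : sphere (0 : E) 1 => Ω θ) μ.toSphere)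
    (hΩmean : ∫ θ : sphere (0 : E) 1, Ω θ ∂μ.toSphere = 0) (hβ : finrank ℝ E < β)
    {f : E → F} (hf : Continuous f) {B : ℝ} (hB : ∀ x, ‖f x‖ ≤ B) (x : E) {ε : ℝ} (hε : 0 < ε) :
    ∫ y in {y | ε < ‖y‖}, roughKernel Ω β y • (f (x - y) - f x) ∂μ =
      ∫ y in {y | ε < ‖y‖}, roughKernel Ω β y • f (x - y) ∂μ := by
  have hint := integrableOn_roughKernel (μ := μ) hΩ hΩint hβ hε
  simp only [smul_sub]
  rw [integral_sub _ (hint.smul_const (f x)), integral_smul_const,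
    setIntegral_roughKernel_eq_zero hΩmean, zero_smul, sub_zero]
  exact hint.smul_bdd B (hf.comp (by fun_prop)).aestronglyMeasurable (.of_forall fun y => hB _)

theorem setLIntegral_Ioi_rpow_mul_min_lt_top {a : ℝ} (ha0 : 0 < a) (ha1 : a < 1) {b c : ℝ≥0∞}
    (hb : b ≠ ∞) (hc : c ≠ ∞) :
    ∫⁻ r in Ioi (0 : ℝ), ENNReal.ofReal r ^ (a - 2) * min (b * ENNReal.ofReal r) c < ∞ := by
  rw [← Ioc_union_Ioi_eq_Ioi (zero_le_one (α := ℝ))]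
  refine (lintegral_union_le _ _ _).trans_lt (ENNReal.add_lt_top.2 ⟨?_, ?_⟩)
  · calc ∫⁻ r in Ioc (0 : ℝ) 1, ENNReal.ofReal r ^ (a - 2) * min (b * ENNReal.ofReal r) c
        ≤ ∫⁻ r in Ioc (0 : ℝ) 1, b * ENNReal.ofReal r ^ (a - 1) := by
          refine setLIntegral_mono' measurableSet_Ioc fun r hr => ?_
          have hr0 : ENNReal.ofReal r ≠ 0 := by simpa using hr.1
          rw [show a - 1 = a - 2 + 1 by ring, ENNReal.rpow_add _ _ hr0 ENNReal.ofReal_ne_top,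
            ENNReal.rpow_one, mul_left_comm]
          gcongr
          exact min_le_left _ _
      _ < ∞ := by
          rw [lintegral_const_mul' _ _ hb, setLIntegral_Ioc_rpow ha0 zero_le_one]
          simp [ENNReal.mul_lt_top_iff, hb.lt_top]
  · calc ∫⁻ r in Ioi (1 : ℝ), ENNReal.ofReal r ^ (a - 2) * min (b * ENNReal.ofReal r) c
        ≤ ∫⁻ r in Ioi (1 : ℝ), c * ENNReal.ofReal r ^ (-(1 - a) - 1) := by
          refine lintegral_mono fun r => ?_
          rw [show -(1 - a) - 1 = a - 2 by ring, mul_comm c]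
          gcongr
          exact min_le_right _ _
      _ < ∞ := by
          rw [lintegral_const_mul' _ _ hc, setLIntegral_Ioi_rpow (sub_pos.2 ha1) one_pos]
          simp [ENNReal.mul_lt_top_iff, hc.lt_top]

theorem integrable_roughKernel_smul_sub (hΩ : Measurable Ω)
    (hΩint : Integrable (fun θ : sphere (0 : E) 1 => Ω θ) μ.toSphere)
    (hβ : finrank ℝ E < β) (hβ' : β < finrank ℝ E + 1) {f : E → F} {K : ℝ≥0}
    (hf : LipschitzWith K f) {B : ℝ} (hB : ∀ x, ‖f x‖ ≤ B) (x : E) :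
    Integrable (fun y => roughKernel Ω β y • (f (x - y) - f x)) μ := by
  have hcont := hf.continuous
  refine integrable_roughKernel_smul hΩ hΩint (by fun_prop)
    (G := fun r => min (K * ENNReal.ofReal r) (ENNReal.ofReal (B + B))) (by fun_prop)
    (fun y => le_min ?_ ?_) ?_
  · simpa [edist_eq_enorm_sub, ofReal_norm] using hf.edist_le_mul (x - y) x
  · rw [← ofReal_norm]
    exact ENNReal.ofReal_le_ofReal ((norm_sub_le _ _).trans (add_le_add (hB _) (hB _)))
  · rw [show finrank ℝ E - 1 - β = finrank ℝ E + 1 - β - 2 by ring]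
    exact setLIntegral_Ioi_rpow_mul_min_lt_top (by linarith) (by linarith) ENNReal.coe_ne_top
      ENNReal.ofReal_ne_top

theorem tendsto_setIntegral_lt_norm {g : E → F} (hg : Integrable g μ) :
    Tendsto (fun ε : ℝ => ∫ y in {y | ε < ‖y‖}, g y ∂μ) (𝓝[>] 0) (𝓝 (∫ y, g y ∂μ)) := by
  simp only [← integral_indicator (measurableSet_lt_norm _)]
  refine tendsto_integral_filter_of_dominated_convergence (fun y => ‖g y‖)
    (.of_forall fun ε => hg.1.indicator (measurableSet_lt_norm ε))
    (.of_forall fun ε => .of_forall fun y => norm_indicator_le_norm_self _ _) hg.norm ?_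
  filter_upwards [Measure.ae_ne μ 0] with y hy
  refine tendsto_const_nhds.congr' ?_
  filter_upwards [mem_nhdsWithin_of_mem_nhds (Iio_mem_nhds (norm_pos_iff.2 hy))] with ε hε
  exact (indicator_of_mem (s := {y | ε < ‖y‖}) hε g).symm

theorem tendsto_setIntegral_roughKernel_smul [CompleteSpace F] (hΩ : Measurable Ω)
    (hΩint : Integrable (fun θ : sphere (0 : E) 1 => Ω θ) μ.toSphere)
    (hΩmean : ∫ θ : sphere (0 : E) 1, Ω θ ∂μ.toSphere = 0)
    (hβ : finrank ℝ E < β) (hβ' : β < finrank ℝ E + 1) {f : E → F} {K : ℝ≥0}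
    (hf : LipschitzWith K f) {B : ℝ} (hB : ∀ x, ‖f x‖ ≤ B) (x : E) :
    Tendsto (fun ε : ℝ => ∫ y in {y | ε < ‖y‖}, roughKernel Ω β y • f (x - y) ∂μ) (𝓝[>] 0)
      (𝓝 (∫ y, roughKernel Ω β y • (f (x - y) - f x) ∂μ)) := by
  refine (tendsto_setIntegral_lt_norm
    (integrable_roughKernel_smul_sub hΩ hΩint hβ hβ' hf hB x)).congr' ?_
  filter_upwards [self_mem_nhdsWithin] with ε hε
  exact setIntegral_roughKernel_smul_sub hΩ hΩint hΩmean hβ hf.continuous hB x hε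

end RoughKernel

section BallMean

open Module

theorem rpow_laverage_rpow_mono {X : Type*} [MeasurableSpace X] {μ : Measure X}
    [IsFiniteMeasure μ] {g : X → ℝ≥0∞} (hg : AEMeasurable g μ) {s p : ℝ} (hs : 0 < s)
    (hsp : s ≤ p) : (⨍⁻ w, g w ^ s ∂μ) ^ (1 / s) ≤ (⨍⁻ w, g w ^ p ∂μ) ^ (1 / p) := by
  rcases eq_zero_or_neZero μ with rfl | hμ
  · simp [hs]
  · exact eLpNorm'_le_eLpNorm'_of_exponent_le hs hsp ((μ univ)⁻¹ • μ)
      (hg.smul_measure _).aestronglyMeasurable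

variable {E : Type*} [NormedAddCommGroup E] [MeasurableSpace E]

/-- The normalized `L^s` mean of `g` over the closed ball `B(x, r)`. -/
def ballMean (μ : Measure E) (s : ℝ) (g : E → ℝ≥0∞) (x : E) (r : ℝ) : ℝ≥0∞ :=
  (⨍⁻ w in closedBall x r, g w ^ s ∂μ) ^ (1 / s)

theorem measurable_ballMean (μ : Measure E) (s : ℝ) (g : E → ℝ≥0∞) (x : E) :
    Measurable (ballMean μ s g x) := by
  have hnum : Measurable fun r => ∫⁻ w in closedBall x r, g w ^ s ∂μ :=
    Monotone.measurable fun _ _ hab => lintegral_mono_set (closedBall_subset_closedBall hab)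
  have hden : Measurable fun r => μ (closedBall x r) :=
    Monotone.measurable fun _ _ hab => measure_mono (closedBall_subset_closedBall hab)
  unfold ballMean
  simp only [setLAverage_eq]
  exact (hnum.div hden).pow_const _

theorem ballMean_mono_exponent [ProperSpace E] {μ : Measure E} [IsFiniteMeasureOnCompacts μ]
    {g : E → ℝ≥0∞} (hg : Measurable g) {s p : ℝ} (hs : 0 < s) (hsp : s ≤ p) (x : E) (r : ℝ) :
    ballMean μ s g x r ≤ ballMean μ p g x r :=
  have : IsFiniteMeasure (μ.restrict (closedBall x r)) :=
    isFiniteMeasure_restrict.2 measure_closedBall_lt_top.ne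
  rpow_laverage_rpow_mono hg.aemeasurable hs hsp

variable [NormedSpace ℝ E] [FiniteDimensional ℝ E] [BorelSpace E] {μ : Measure E}
  [μ.IsAddHaarMeasure] {s : ℝ}

theorem measure_closedBall_eq (x : E) {r : ℝ} (hr : 0 ≤ r) :
    μ (closedBall x r) = ENNReal.ofReal r ^ (finrank ℝ E : ℝ) * μ (ball 0 1) := by
  rw [Measure.addHaar_closedBall _ _ hr, ENNReal.ofReal_pow hr, ENNReal.rpow_natCast]

theorem lintegral_comp_add_smul_sub {G : E → ℝ≥0∞} (hG : Measurable G) (z : E) {t : ℝ}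
    (ht : 0 < t) : ∫⁻ w, G (z + t • (w - z)) ∂μ =
      ENNReal.ofReal t ^ (-finrank ℝ E : ℝ) * ∫⁻ w, G w ∂μ := by
  calc ∫⁻ w, G (z + t • (w - z)) ∂μ = ∫⁻ w, G (z + t • w) ∂μ :=
        lintegral_sub_right_eq_self (fun w => G (z + t • w)) z
    _ = ∫⁻ w, G (z + w) ∂μ.map (t • ·) := by rw [lintegral_map (by fun_prop) (by fun_prop)]
    _ = _ := by
        rw [Measure.map_addHaar_smul _ ht.ne', lintegral_smul_measure,
          lintegral_add_left_eq_self G, smul_eq_mul, abs_of_pos (by positivity),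
          ENNReal.ofReal_inv_of_pos (by positivity), ENNReal.rpow_neg, ENNReal.rpow_natCast,
          ENNReal.ofReal_pow ht.le]

theorem setLIntegral_closedBall_comp_add_smul_sub_le {G : E → ℝ≥0∞} (hG : Measurable G) {x z : E}
    {r : ℝ} (hz : z ∈ closedBall x r) {t : ℝ} (ht : t ∈ Ioc (0 : ℝ) 1) :
    ∫⁻ w in closedBall x r, G (z + t • (w - z)) ∂μ ≤
      ENNReal.ofReal t ^ (-finrank ℝ E : ℝ) * ∫⁻ w in closedBall x r, G w ∂μ := by
  rw [← lintegral_indicator measurableSet_closedBall,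
    ← lintegral_indicator measurableSet_closedBall,
    ← lintegral_comp_add_smul_sub (hG.indicator measurableSet_closedBall) z ht.1]
  refine lintegral_mono (indicator_le fun w hw => ?_)
  have hmem : z + t • (w - z) ∈ closedBall x r :=
    (convex_closedBall x r).add_smul_sub_mem hz hw ⟨ht.1.le, ht.2⟩
  rw [indicator_of_mem hmem]

theorem laverage_comp_add_smul_sub_le_ballMean (hs : 1 ≤ s) {g : E → ℝ≥0∞} (hg : Measurable g)
    {x z : E} {r : ℝ} (hz : z ∈ closedBall x r) {t : ℝ} (ht : t ∈ Ioc (0 : ℝ) 1) :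
    ⨍⁻ w in closedBall x r, g (z + t • (w - z)) ∂μ ≤
      ENNReal.ofReal t ^ (-(finrank ℝ E / s)) * ballMean μ s g x r := by
  calc ⨍⁻ w in closedBall x r, g (z + t • (w - z)) ∂μ
      ≤ (⨍⁻ w in closedBall x r, g (z + t • (w - z)) ^ s ∂μ) ^ (1 / s) := by
        simpa [ballMean] using ballMean_mono_exponent (μ := μ)
          (g := fun w => g (z + t • (w - z))) (by fun_prop) one_pos hs x r
    _ ≤ (ENNReal.ofReal t ^ (-finrank ℝ E : ℝ) * ⨍⁻ w in closedBall x r, g w ^ s ∂μ) ^ (1 / s) := by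
        rw [setLAverage_eq, setLAverage_eq, ← mul_div_assoc]
        gcongr
        exact setLIntegral_closedBall_comp_add_smul_sub_le (hg.pow_const s) hz ht
    _ = _ := by
        rw [ENNReal.mul_rpow_of_nonneg _ _ (by positivity), ← ENNReal.rpow_mul, ballMean]
        congr 2
        ring

end BallMean

section Morrey

open Module

theorem enorm_sub_le_enorm_mul_lintegral_fderiv {E F : Type*} [NormedAddCommGroup E]
    [NormedSpace ℝ E] [NormedAddCommGroup F] [NormedSpace ℝ F] [CompleteSpace F] {f : E → F}
    (hf : ContDiff ℝ 1 f) (z w : E) : ‖f w - f z‖ₑ ≤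
      ‖w - z‖ₑ * ∫⁻ t in Ioc (0 : ℝ) 1, ‖fderiv ℝ f (z + t • (w - z))‖ₑ := by
  have hderiv (t : ℝ) : HasDerivAt (fun t : ℝ => f (z + t • (w - z)))
      (fderiv ℝ f (z + t • (w - z)) (w - z)) t := by
    have hline : HasDerivAt (fun t : ℝ => z + t • (w - z)) (w - z) t := by
      simpa using ((hasDerivAt_id t).smul_const (w - z)).const_add z
    exact (hf.differentiable one_ne_zero _).hasFDerivAt.comp_hasDerivAt t hline
  have hcont : Continuous fun t : ℝ => fderiv ℝ f (z + t • (w - z)) :=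
    (hf.continuous_fderiv one_ne_zero).comp (by fun_prop)
  have hftc : ∫ t in (0 : ℝ)..1, fderiv ℝ f (z + t • (w - z)) (w - z) = f w - f z := by
    simpa using intervalIntegral.integral_eq_sub_of_hasDerivAt (fun t _ => hderiv t)
      ((hcont.clm_apply continuous_const).intervalIntegrable 0 1)
  rw [← hftc, intervalIntegral.integral_of_le zero_le_one, ← lintegral_const_mul' _ _ enorm_ne_top]
  refine (enorm_integral_le_lintegral_enorm _).trans (lintegral_mono fun t => ?_)
  rw [mul_comm]
  exact ContinuousLinearMap.le_opENorm _ _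

variable {E F : Type*} [NormedAddCommGroup E] [NormedSpace ℝ E] [FiniteDimensional ℝ E]
  [MeasurableSpace E] [BorelSpace E] {μ : Measure E} [μ.IsAddHaarMeasure]
  [NormedAddCommGroup F] [NormedSpace ℝ F] [CompleteSpace F] {s : ℝ}

theorem laverage_enorm_sub_le (hs : 1 ≤ s) (hds : finrank ℝ E < s) {f : E → F}
    (hf : ContDiff ℝ 1 f) {x z : E} {r : ℝ} (hz : z ∈ closedBall x r) :
    ⨍⁻ w in closedBall x r, ‖f w - f z‖ₑ ∂μ ≤
      ENNReal.ofReal (2 * r) * (ENNReal.ofReal (1 - finrank ℝ E / s)⁻¹ *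
        ballMean μ s (fun w => ‖fderiv ℝ f w‖ₑ) x r) := by
  have hcont : Continuous (fderiv ℝ f) := hf.continuous_fderiv one_ne_zero
  have hexp : 0 < 1 - finrank ℝ E / s := by
    rw [sub_pos, div_lt_one (by linarith)]
    exact hds
  calc ⨍⁻ w in closedBall x r, ‖f w - f z‖ₑ ∂μ
      ≤ ⨍⁻ w in closedBall x r, ENNReal.ofReal (2 * r) *
          (∫⁻ t in Ioc (0 : ℝ) 1, ‖fderiv ℝ f (z + t • (w - z))‖ₑ) ∂μ := by
        rw [setLAverage_eq, setLAverage_eq]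
        gcongr 1
        refine setLIntegral_mono' measurableSet_closedBall fun w hw => ?_
        refine (enorm_sub_le_enorm_mul_lintegral_fderiv hf z w).trans ?_
        gcongr
        rw [← ofReal_norm, ← dist_eq_norm, two_mul]
        exact ENNReal.ofReal_le_ofReal ((dist_triangle_right w z x).trans (add_le_add hw hz))
    _ = ENNReal.ofReal (2 * r) * ∫⁻ t in Ioc (0 : ℝ) 1,
          ⨍⁻ w in closedBall x r, ‖fderiv ℝ f (z + t • (w - z))‖ₑ ∂μ := by
        rw [laverage, lintegral_const_mul' _ _ ENNReal.ofReal_ne_top, lintegral_lintegral_swap]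
        · rfl
        · exact (hcont.comp (by fun_prop : Continuous fun q : E × ℝ =>
            z + q.2 • (q.1 - z))).enorm.aemeasurable
    _ ≤ ENNReal.ofReal (2 * r) * ∫⁻ t in Ioc (0 : ℝ) 1,
          ENNReal.ofReal t ^ (1 - finrank ℝ E / s - 1) *
            ballMean μ s (fun w => ‖fderiv ℝ f w‖ₑ) x r := by
        gcongr 1
        refine setLIntegral_mono' measurableSet_Ioc fun t ht => ?_
        rw [sub_sub_cancel_left]
        exact laverage_comp_add_smul_sub_le_ballMean hs hcont.enorm.measurable hz ht
    _ = _ := by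
        rw [lintegral_mul_const _ (by fun_prop), setLIntegral_Ioc_rpow hexp zero_le_one]
        simp

theorem enorm_sub_le_mul_ballMean_fderiv (hs : 1 ≤ s) (hds : finrank ℝ E < s) {f : E → F}
    (hf : ContDiff ℝ 1 f) (x y : E) :
    ‖f (x - y) - f x‖ₑ ≤ ENNReal.ofReal (4 * (1 - finrank ℝ E / s)⁻¹) *
      (ENNReal.ofReal ‖y‖ * ballMean μ s (fun w => ‖fderiv ℝ f w‖ₑ) x ‖y‖) := by
  rcases eq_or_ne y 0 with rfl | hy
  · simp
  have hcont := hf.continuous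
  have hball := (measure_closedBall_pos μ x (norm_pos_iff.2 hy)).ne'
  calc ‖f (x - y) - f x‖ₑ = ⨍⁻ _ in closedBall x ‖y‖, ‖f (x - y) - f x‖ₑ ∂μ :=
        (setLAverage_const hball measure_closedBall_lt_top.ne _).symm
    _ ≤ ⨍⁻ w in closedBall x ‖y‖, (‖f w - f (x - y)‖ₑ + ‖f w - f x‖ₑ) ∂μ := by
        refine lintegral_mono fun w => ?_
        simpa only [edist_eq_enorm_sub] using edist_triangle_left (f (x - y)) (f x) (f w)
    _ = (⨍⁻ w in closedBall x ‖y‖, ‖f w - f (x - y)‖ₑ ∂μ) +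
          ⨍⁻ w in closedBall x ‖y‖, ‖f w - f x‖ₑ ∂μ :=
        lintegral_add_left (by fun_prop : Continuous fun w => ‖f w - f (x - y)‖ₑ).measurable _
    _ ≤ _ := add_le_add (laverage_enorm_sub_le hs hds hf (by simp))
        (laverage_enorm_sub_le hs hds hf (mem_closedBall_self (norm_nonneg y)))
    _ = _ := by
        rw [ENNReal.ofReal_mul zero_le_two, ENNReal.ofReal_mul zero_le_four, ENNReal.ofReal_ofNat,
          ENNReal.ofReal_ofNat]
        ring

end Morrey

section LayerCake

variable {X : Type*} [MeasurableSpace X] {ν : Measure X} [SFinite ν] {g : X → ℝ≥0∞}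

theorem lintegral_setLIntegral_ofReal_lt_swap (hg : Measurable g) {h : ℝ → ℝ≥0∞}
    (hh : Measurable h) :
    ∫⁻ x, (∫⁻ t in {t : ℝ | 0 < t ∧ ENNReal.ofReal t < g x}, h t) ∂ν =
      ∫⁻ t in Ioi (0 : ℝ), h t * ν {x | ENNReal.ofReal t < g x} := by
  have hset : MeasurableSet {z : X × ℝ | 0 < z.2 ∧ ENNReal.ofReal z.2 < g z.1} :=
    (measurableSet_lt measurable_const measurable_snd).inter
      (measurableSet_lt (ENNReal.measurable_ofReal.comp measurable_snd) (hg.comp measurable_fst))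
  calc ∫⁻ x, (∫⁻ t in {t : ℝ | 0 < t ∧ ENNReal.ofReal t < g x}, h t) ∂ν
      = ∫⁻ x, (∫⁻ t, {z : X × ℝ | 0 < z.2 ∧ ENNReal.ofReal z.2 < g z.1}.indicator
          (fun z => h z.2) (x, t)) ∂ν :=
        lintegral_congr fun x => (lintegral_indicator (measurable_prodMk_left hset) h).symm
    _ = ∫⁻ t, ∫⁻ x, {z : X × ℝ | 0 < z.2 ∧ ENNReal.ofReal z.2 < g z.1}.indicator
          (fun z => h z.2) (x, t) ∂ν :=
        lintegral_lintegral_swap ((hh.comp measurable_snd).indicator hset).aemeasurable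
    _ = _ := by
        rw [← lintegral_indicator measurableSet_Ioi]
        refine lintegral_congr fun t => ?_
        by_cases ht : 0 < t
        · rw [indicator_of_mem (mem_Ioi.2 ht),
            ← lintegral_indicator_const (measurableSet_lt measurable_const hg)]
          simp [indicator, ht]
        · simp [indicator, ht]

theorem lintegral_rpow_eq_setLIntegral_Ioi (hg : Measurable g) {a : ℝ} (ha : 0 < a) :
    ∫⁻ x, g x ^ a ∂ν = ENNReal.ofReal a *
      ∫⁻ t in Ioi (0 : ℝ), ENNReal.ofReal t ^ (a - 1) * ν {x | ENNReal.ofReal t < g x} := by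
  rw [← lintegral_setLIntegral_ofReal_lt_swap hg (by fun_prop),
    ← lintegral_const_mul' _ _ ENNReal.ofReal_ne_top]
  refine lintegral_congr fun x => ?_
  rw [setLIntegral_rpow_ofReal_lt ha, ← mul_assoc, ← ENNReal.ofReal_mul ha.le,
    mul_inv_cancel₀ ha.ne', ENNReal.ofReal_one, one_mul]

end LayerCake

section MaximalFunction

open Module

variable {E : Type*} [NormedAddCommGroup E] [MeasurableSpace E]

/-- The centred Hardy–Littlewood maximal function of `u` over closed balls. -/
def maximalFunction (μ : Measure E) (u : E → ℝ≥0∞) (x : E) : ℝ≥0∞ :=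
  ⨆ (r : ℝ) (_ : 0 < r), ⨍⁻ w in closedBall x r, u w ∂μ

theorem lt_maximalFunction_iff {μ : Measure E} {u : E → ℝ≥0∞} {t : ℝ≥0∞} {x : E} :
    t < maximalFunction μ u x ↔ ∃ r > 0, t < ⨍⁻ w in closedBall x r, u w ∂μ := by
  simp only [maximalFunction, lt_iSup_iff, exists_prop, gt_iff_lt]

theorem laverage_le_maximalFunction (μ : Measure E) (u : E → ℝ≥0∞) (x : E) {r : ℝ} (hr : 0 < r) :
    ⨍⁻ w in closedBall x r, u w ∂μ ≤ maximalFunction μ u x :=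
  le_iSup₂ (f := fun r (_ : 0 < r) => ⨍⁻ w in closedBall x r, u w ∂μ) r hr

theorem maximalFunction_le_add_const (μ : Measure E) {u v : E → ℝ≥0∞} {c : ℝ≥0∞}
    (huv : ∀ x, u x ≤ v x + c) (x : E) : maximalFunction μ u x ≤ maximalFunction μ v x + c := by
  refine iSup₂_le fun r hr => ?_
  calc ⨍⁻ w in closedBall x r, u w ∂μ ≤ ⨍⁻ w in closedBall x r, (v w + c) ∂μ :=
        lintegral_mono huv
    _ = (⨍⁻ w in closedBall x r, v w ∂μ) + ⨍⁻ _ in closedBall x r, c ∂μ :=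
        lintegral_add_right _ measurable_const
    _ ≤ maximalFunction μ v x + c := by
        gcongr
        · exact laverage_le_maximalFunction μ v x hr
        · rw [setLAverage_eq, setLIntegral_const, mul_div_assoc]
          exact mul_le_of_le_one_right' ENNReal.div_self_le_one

variable [NormedSpace ℝ E] [FiniteDimensional ℝ E] [BorelSpace E] {μ : Measure E}
  [μ.IsAddHaarMeasure]

theorem isOpen_lt_maximalFunction (u : E → ℝ≥0∞) (t : ℝ≥0∞) :
    IsOpen {x | t < maximalFunction μ u x} := by
  refine isOpen_iff_mem_nhds.2 fun x hx => ?_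
  obtain ⟨r, hr, hlt⟩ := lt_maximalFunction_iff.1 hx
  rw [setLAverage_eq] at hlt
  have hcont : ContinuousAt
      (fun ρ : ℝ => (∫⁻ w in closedBall x r, u w ∂μ) / μ (closedBall x ρ)) r := by
    have hvol : ContinuousAt (fun ρ : ℝ => μ (closedBall x ρ)) r := by
      have hpow : ContinuousAt (fun ρ : ℝ => ENNReal.ofReal (ρ ^ finrank ℝ E) * μ (ball 0 1)) r :=
        ENNReal.Tendsto.mul_const (ENNReal.continuous_ofReal.comp (by fun_prop)).continuousAt
          (.inr measure_ball_lt_top.ne)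
      refine hpow.congr ?_
      filter_upwards [lt_mem_nhds hr] with ρ hρ
      rw [Measure.addHaar_closedBall μ x hρ.le]
    exact ENNReal.Tendsto.const_div hvol (.inl measure_closedBall_lt_top.ne)
  obtain ⟨δ, hδ, hnear⟩ := Metric.eventually_nhds_iff.1 (hcont.eventually (lt_mem_nhds hlt))
  filter_upwards [ball_mem_nhds x (half_pos hδ)] with y hy
  refine lt_maximalFunction_iff.2 ⟨r + δ / 2, by positivity, ?_⟩
  calc t < (∫⁻ w in closedBall x r, u w ∂μ) / μ (closedBall x (r + δ / 2)) := by
        refine hnear ?_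
        rw [Real.dist_eq, add_sub_cancel_left, abs_of_pos (half_pos hδ)]
        exact half_lt_self hδ
    _ ≤ ⨍⁻ w in closedBall y (r + δ / 2), u w ∂μ := by
        rw [setLAverage_eq, Measure.addHaar_closedBall_center μ x,
          Measure.addHaar_closedBall_center μ y]
        gcongr
        exact closedBall_subset_closedBall' (by linarith [mem_ball'.1 hy])

theorem measurable_maximalFunction (u : E → ℝ≥0∞) : Measurable (maximalFunction μ u) :=
  measurable_of_Ioi fun t => (isOpen_lt_maximalFunction u t).measurableSet

theorem mul_measure_le_of_forall_closedBall {A : Set E} {ρ : E → ℝ} {R : ℝ}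
    (hρpos : ∀ x ∈ A, 0 < ρ x) (hρR : ∀ x ∈ A, ρ x ≤ R) {ν : Measure E} {t : ℝ≥0∞}
    (hν : ∀ x ∈ A, t * μ (closedBall x (ρ x)) ≤ ν (closedBall x (ρ x))) :
    t * μ A ≤ 5 ^ finrank ℝ E * ν univ := by
  obtain ⟨W, hWA, hdisj, hcov⟩ := Vitali.exists_disjoint_subfamily_covering_enlargement_closedBall
    A (fun x => x) ρ R hρR 5 (by norm_num)
  have hWc : W.Countable := hdisj.countable_of_nonempty_interior fun x hx =>
    ⟨x, ball_subset_interior_closedBall (mem_ball_self (hρpos x (hWA hx)))⟩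
  have hsub : A ⊆ ⋃ b ∈ W, closedBall b (5 * ρ b) := fun x hx => by
    obtain ⟨b, hb, hxb⟩ := hcov x hx
    exact mem_iUnion₂.2 ⟨b, hb, hxb (mem_closedBall_self (hρpos x hx).le)⟩
  calc t * μ A ≤ t * ∑' b : W, μ (closedBall (b : E) (5 * ρ b)) := by
        gcongr
        exact (measure_mono hsub).trans (measure_biUnion_le _ hWc _)
    _ = ∑' b : W, 5 ^ finrank ℝ E * (t * μ (closedBall (b : E) (ρ b))) := by
        rw [← ENNReal.tsum_mul_left]
        congr 1 with b
        rw [Measure.addHaar_closedBall_mul μ _ (by norm_num) (hρpos b (hWA b.2)).le,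
          Measure.addHaar_closedBall_center μ (b : E), ENNReal.ofReal_pow (by norm_num),
          ENNReal.ofReal_ofNat, mul_left_comm]
    _ ≤ ∑' b : W, 5 ^ finrank ℝ E * ν (closedBall (b : E) (ρ b)) := by
        gcongr with b
        exact hν b (hWA b.2)
    _ = 5 ^ finrank ℝ E * ν (⋃ b ∈ W, closedBall b (ρ b)) := by
        rw [ENNReal.tsum_mul_left,
          measure_biUnion hWc hdisj fun _ _ => measurableSet_closedBall]
    _ ≤ 5 ^ finrank ℝ E * ν univ := by
        gcongr
        exact subset_univ _

theorem exists_forall_le_of_measure_closedBall_le [Nontrivial E] {c : ℝ≥0∞} (hc : c ≠ ∞) :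
    ∃ R, ∀ (x : E) (r : ℝ), μ (closedBall x r) ≤ c → r ≤ R := by
  have hd : (0 : ℝ) < finrank ℝ E := Nat.cast_pos.2 finrank_pos
  have hV : μ (ball (0 : E) 1) ≠ 0 := (measure_ball_pos μ 0 one_pos).ne'
  have hfin : (c / μ (ball (0 : E) 1)) ^ (finrank ℝ E : ℝ)⁻¹ ≠ ∞ :=
    ENNReal.rpow_ne_top_of_nonneg (by positivity) (ENNReal.div_ne_top hc hV)
  refine ⟨((c / μ (ball (0 : E) 1)) ^ (finrank ℝ E : ℝ)⁻¹).toReal, fun x r hr => ?_⟩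
  rcases lt_or_ge r 0 with hr0 | hr0
  · exact hr0.le.trans ENNReal.toReal_nonneg
  · rw [measure_closedBall_eq x hr0] at hr
    exact (ENNReal.ofReal_le_iff_le_toReal hfin).1 ((ENNReal.le_rpow_inv_iff hd).2
      ((ENNReal.le_div_iff_mul_le (.inl hV) (.inl measure_ball_lt_top.ne)).2 hr))

theorem mul_measure_lt_maximalFunction_le [Nontrivial E] (u : E → ℝ≥0∞) (t : ℝ≥0∞) :
    t * μ {x | t < maximalFunction μ u x} ≤ 5 ^ finrank ℝ E * ∫⁻ x, u x ∂μ := by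
  rcases eq_or_ne (∫⁻ x, u x ∂μ) ∞ with hU | hU
  · simp [hU]
  rcases eq_or_ne t 0 with rfl | ht0
  · simp
  rcases eq_or_ne t ∞ with rfl | htop
  · simp
  choose! ρ hρpos hρ using fun x (hx : x ∈ {x | t < maximalFunction μ u x}) =>
    lt_maximalFunction_iff.1 hx
  have hball (x : E) (hx : x ∈ {x | t < maximalFunction μ u x}) :
      t * μ (closedBall x (ρ x)) ≤ μ.withDensity u (closedBall x (ρ x)) := by
    have hlt := (hρ x hx).le
    rw [setLAverage_eq] at hlt
    rw [withDensity_apply _ measurableSet_closedBall]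
    exact ENNReal.mul_le_of_le_div hlt
  obtain ⟨R, hR⟩ := exists_forall_le_of_measure_closedBall_le (μ := μ) (ENNReal.div_ne_top hU ht0)
  have hρR (x : E) (hx : x ∈ {x | t < maximalFunction μ u x}) : ρ x ≤ R := by
    refine hR x _ ((ENNReal.le_div_iff_mul_le (.inl ht0) (.inl htop)).2 ?_)
    rw [mul_comm]
    refine (hball x hx).trans ?_
    rw [withDensity_apply _ measurableSet_closedBall]
    exact setLIntegral_le_lintegral _ _
  simpa using mul_measure_le_of_forall_closedBall hρpos hρR hball

theorem mul_measure_lt_maximalFunction_le_setLIntegral [Nontrivial E] {u : E → ℝ≥0∞}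
    (hu : Measurable u) (t : ℝ≥0∞) : t * μ {x | t < maximalFunction μ u x} ≤
      2 * 5 ^ finrank ℝ E * ∫⁻ x in {x | t < 2 * u x}, u x ∂μ := by
  have hset : MeasurableSet {x | t < 2 * u x} := measurableSet_lt measurable_const (by fun_prop)
  have hsplit (x : E) : u x ≤ {x | t < 2 * u x}.indicator u x + t / 2 := by
    by_cases hx : t < 2 * u x
    · simp [hx]
    · simp only [indicator, mem_ofPred_eq, hx, if_false, zero_add]
      rw [ENNReal.le_div_iff_mul_le (by simp) (by simp), mul_comm]
      exact not_lt.1 hx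
  have hsub : {x | t < maximalFunction μ u x} ⊆
      {x | t / 2 < maximalFunction μ ({x | t < 2 * u x}.indicator u) x} := fun x hx => by
    have hlt := (mem_ofPred.1 hx).trans_le (maximalFunction_le_add_const μ hsplit x)
    nth_rw 1 [← ENNReal.add_halves t] at hlt
    exact lt_of_add_lt_add_right hlt
  calc t * μ {x | t < maximalFunction μ u x}
      = 2 * (t / 2 * μ {x | t < maximalFunction μ u x}) := by
        rw [← mul_assoc, ENNReal.mul_div_cancel (by simp) (by simp)]
    _ ≤ 2 * (t / 2 * μ {x | t / 2 < maximalFunction μ ({x | t < 2 * u x}.indicator u) x}) := by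
        gcongr
    _ ≤ 2 * (5 ^ finrank ℝ E * ∫⁻ x, {x | t < 2 * u x}.indicator u x ∂μ) := by
        gcongr 1
        exact mul_measure_lt_maximalFunction_le _ _
    _ = _ := by rw [lintegral_indicator hset, mul_assoc]

theorem exists_lintegral_maximalFunction_rpow_le [Nontrivial E] (μ : Measure E)
    [μ.IsAddHaarMeasure] {P : ℝ} (hP : 1 < P) : ∃ C : ℝ≥0∞, C ≠ ∞ ∧ ∀ u : E → ℝ≥0∞,
      Measurable u → ∫⁻ x, maximalFunction μ u x ^ P ∂μ ≤ C * ∫⁻ x, u x ^ P ∂μ := by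
  have hP0 : 0 < P := one_pos.trans hP
  have hP1 : 0 < P - 1 := sub_pos.2 hP
  refine ⟨ENNReal.ofReal P * (2 * 5 ^ finrank ℝ E * (ENNReal.ofReal (P - 1)⁻¹ * 2 ^ (P - 1))),
    by finiteness, fun u hu => ?_⟩
  calc ∫⁻ x, maximalFunction μ u x ^ P ∂μ
      = ENNReal.ofReal P * ∫⁻ t in Ioi (0 : ℝ), ENNReal.ofReal t ^ (P - 1) *
          μ {x | ENNReal.ofReal t < maximalFunction μ u x} :=
        lintegral_rpow_eq_setLIntegral_Ioi (measurable_maximalFunction u) hP0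
    _ ≤ ENNReal.ofReal P * ∫⁻ t in Ioi (0 : ℝ), 2 * 5 ^ finrank ℝ E *
          (ENNReal.ofReal t ^ (P - 1 - 1) * μ.withDensity u {x | ENNReal.ofReal t < 2 * u x}) := by
        gcongr 1
        refine setLIntegral_mono' measurableSet_Ioi fun t (ht : 0 < t) => ?_
        have ht0 : ENNReal.ofReal t ≠ 0 := by simpa using ht
        rw [withDensity_apply _ (measurableSet_lt measurable_const (by fun_prop)), mul_left_comm]
        nth_rw 1 [show P - 1 = P - 1 - 1 + 1 by ring]
        rw [ENNReal.rpow_add _ _ ht0 ENNReal.ofReal_ne_top, ENNReal.rpow_one, mul_assoc]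
        gcongr 1
        exact mul_measure_lt_maximalFunction_le_setLIntegral hu _
    _ = ENNReal.ofReal P * (2 * 5 ^ finrank ℝ E * (ENNReal.ofReal (P - 1)⁻¹ *
          ∫⁻ x, (2 * u x) ^ (P - 1) ∂μ.withDensity u)) := by
        rw [lintegral_const_mul' _ _ (by finiteness),
          lintegral_rpow_eq_setLIntegral_Ioi (by fun_prop) hP1, ← mul_assoc (ENNReal.ofReal _⁻¹),
          ← ENNReal.ofReal_mul (by positivity), inv_mul_cancel₀ hP1.ne', ENNReal.ofReal_one,
          one_mul]
    _ = _ := by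
        have hpow (x : E) : u x * (2 * u x) ^ (P - 1) = 2 ^ (P - 1) * u x ^ P := by
          nth_rw 3 [show P = 1 + (P - 1) by ring]
          rw [ENNReal.mul_rpow_of_nonneg _ _ hP1.le,
            ENNReal.rpow_add_of_nonneg _ _ zero_le_one hP1.le, ENNReal.rpow_one, mul_left_comm]
        rw [lintegral_withDensity_eq_lintegral_mul _ hu (by fun_prop)]
        simp only [Pi.mul_apply, hpow]
        rw [lintegral_const_mul _ (by fun_prop)]
        ring

end MaximalFunction

section Hedberg

open Module

theorem setLIntegral_Ioi_rpow_mul_le_add {α κ : ℝ} (hα : 0 < α) (hκ : 0 < κ) {a : ℝ → ℝ≥0∞}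
    {M A : ℝ≥0∞} (haM : ∀ r > 0, a r ≤ M) (haA : ∀ r > 0, a r ≤ ENNReal.ofReal r ^ (-(α + κ)) * A)
    {R : ℝ} (hR : 0 < R) :
    ∫⁻ r in Ioi 0, ENNReal.ofReal r ^ (α - 1) * a r ≤
      ENNReal.ofReal α⁻¹ * (ENNReal.ofReal R ^ α * M) +
        ENNReal.ofReal κ⁻¹ * (ENNReal.ofReal R ^ (-κ) * A) := by
  rw [← Ioc_union_Ioi_eq_Ioi hR.le, lintegral_union measurableSet_Ioi (Ioc_disjoint_Ioi le_rfl),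
    ← mul_assoc, ← mul_assoc, ← setLIntegral_Ioc_rpow hα hR.le, ← setLIntegral_Ioi_rpow hκ hR,
    ← lintegral_mul_const _ (by fun_prop), ← lintegral_mul_const _ (by fun_prop)]
  refine add_le_add (setLIntegral_mono' measurableSet_Ioc fun r hr => ?_)
    (setLIntegral_mono' measurableSet_Ioi fun r hr => ?_)
  · gcongr
    exact haM r hr.1
  · have hr0 : 0 < r := hR.trans hr
    calc ENNReal.ofReal r ^ (α - 1) * a r
        ≤ ENNReal.ofReal r ^ (α - 1) * (ENNReal.ofReal r ^ (-(α + κ)) * A) := by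
          gcongr
          exact haA r hr0
      _ = ENNReal.ofReal r ^ (-κ - 1) * A := by
          rw [← mul_assoc, ← ENNReal.rpow_add _ _ (ENNReal.ofReal_pos.2 hr0).ne'
            ENNReal.ofReal_ne_top]
          ring_nf

theorem exists_rpow_mul_eq_and_rpow_neg_mul_eq {α κ : ℝ} (hα : 0 < α) (hκ : 0 < κ) {M A : ℝ≥0∞}
    (hM0 : M ≠ 0) (hM : M ≠ ∞) (hA0 : A ≠ 0) (hA : A ≠ ∞) :
    ∃ R > 0, ENNReal.ofReal R ^ α * M = M ^ (κ / (α + κ)) * A ^ (α / (α + κ)) ∧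
      ENNReal.ofReal R ^ (-κ) * A = M ^ (κ / (α + κ)) * A ^ (α / (α + κ)) := by
  set ρ := (A / M) ^ (1 / (α + κ)) with hρ
  have hρtop : ρ ≠ ∞ := ENNReal.rpow_ne_top_of_nonneg (by positivity) (ENNReal.div_ne_top hA hM0)
  have hρ0 : ρ ≠ 0 := by simp [hρ, hA0, hA, hM0, hM, ENNReal.div_eq_top]
  have hρpow (c : ℝ) : ρ ^ c = A ^ (c / (α + κ)) * M ^ (-(c / (α + κ))) := by
    rw [hρ, ← ENNReal.rpow_mul, one_div_mul_eq_div, div_eq_mul_inv A,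
      ENNReal.mul_rpow_of_ne_top hA (by simpa), ENNReal.inv_rpow, ENNReal.rpow_neg]
  refine ⟨ρ.toReal, ENNReal.toReal_pos hρ0 hρtop, ?_, ?_⟩ <;>
    rw [ENNReal.ofReal_toReal hρtop, hρpow]
  · rw [show κ / (α + κ) = -(α / (α + κ)) + 1 by field_simp; ring, ENNReal.rpow_add _ _ hM0 hM,
      ENNReal.rpow_one]
    ring
  · rw [show α / (α + κ) = -κ / (α + κ) + 1 by field_simp; ring, ENNReal.rpow_add _ _ hA0 hA,
      ENNReal.rpow_one, neg_div, neg_neg]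
    ring

theorem setLIntegral_Ioi_rpow_mul_le {α κ : ℝ} (hα : 0 < α) (hκ : 0 < κ) {a : ℝ → ℝ≥0∞}
    {M A : ℝ≥0∞} (haM : ∀ r > 0, a r ≤ M)
    (haA : ∀ r > 0, a r ≤ ENNReal.ofReal r ^ (-(α + κ)) * A) :
    ∫⁻ r in Ioi 0, ENNReal.ofReal r ^ (α - 1) * a r ≤
      ENNReal.ofReal (α⁻¹ + κ⁻¹) * (M ^ (κ / (α + κ)) * A ^ (α / (α + κ))) := by
  have hακ : 0 < α / (α + κ) := by positivity
  have hκα : 0 < κ / (α + κ) := by positivity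
  by_cases h0 : M = 0 ∨ A = 0
  · have ha : ∀ r > 0, a r = 0 := by
      rcases h0 with rfl | rfl
      · exact fun r hr => le_zero_iff.1 (haM r hr)
      · exact fun r hr => by simpa using haA r hr
    rw [setLIntegral_congr_fun measurableSet_Ioi (g := 0) fun r hr => by simp [ha r hr]]
    simp
  obtain ⟨hM0, hA0⟩ := not_or.1 h0
  by_cases htop : M = ∞ ∨ A = ∞
  · have hMA : M ^ (κ / (α + κ)) * A ^ (α / (α + κ)) = ∞ := by
      rcases htop with rfl | rfl
      · rw [ENNReal.top_rpow_of_pos hκα, ENNReal.top_mul]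
        simp [ENNReal.rpow_eq_zero_iff, hA0, hακ.not_gt]
      · rw [ENNReal.top_rpow_of_pos hακ, ENNReal.mul_top]
        simp [ENNReal.rpow_eq_zero_iff, hM0, hκα.not_gt]
    rw [hMA, ENNReal.mul_top (ENNReal.ofReal_pos.2 (by positivity)).ne']
    exact le_top
  obtain ⟨hM, hA⟩ := not_or.1 htop
  obtain ⟨R, hR, hRM, hRA⟩ := exists_rpow_mul_eq_and_rpow_neg_mul_eq hα hκ hM0 hM hA0 hA
  refine (setLIntegral_Ioi_rpow_mul_le_add hα hκ haM haA hR).trans_eq ?_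
  rw [hRM, hRA, ← add_mul, ENNReal.ofReal_add (by positivity) (by positivity)]

variable {E : Type*} [NormedAddCommGroup E] [MeasurableSpace E]

/-- The fractional potential `∫₀^∞ r^(α-1) (⨍_{B(x, r)} g^s)^(1/s) dr`, which dominates the rough
singular integral of order `α` when `g` is the norm of the derivative. -/
def meanPotential (μ : Measure E) (α s : ℝ) (g : E → ℝ≥0∞) (x : E) : ℝ≥0∞ :=
  ∫⁻ r in Ioi (0 : ℝ), ENNReal.ofReal r ^ (α - 1) * ballMean μ s g x r

theorem ballMean_le_maximalFunction_rpow (μ : Measure E) {s : ℝ} (hs : 0 < s) (g : E → ℝ≥0∞)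
    (x : E) {r : ℝ} (hr : 0 < r) :
    ballMean μ s g x r ≤ maximalFunction μ (fun w => g w ^ s) x ^ (1 / s) :=
  ENNReal.rpow_le_rpow (laverage_le_maximalFunction μ _ x hr) (by positivity)

variable [NormedSpace ℝ E] [FiniteDimensional ℝ E] [BorelSpace E] {μ : Measure E}
  [μ.IsAddHaarMeasure] {s p : ℝ} {g : E → ℝ≥0∞}

theorem ballMean_le_rpow_mul_rpow_lintegral (hs : 0 < s) (hsp : s ≤ p) (hg : Measurable g) (x : E)
    {r : ℝ} (hr : 0 < r) :
    ballMean μ s g x r ≤ ENNReal.ofReal r ^ (-(finrank ℝ E / p)) *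
      (μ (ball 0 1) ^ (-(1 / p)) * (∫⁻ w, g w ^ p ∂μ) ^ (1 / p)) := by
  have hp : 0 < p := hs.trans_le hsp
  have hr0 : ENNReal.ofReal r ≠ 0 := (ENNReal.ofReal_pos.2 hr).ne'
  calc ballMean μ s g x r ≤ ballMean μ p g x r := ballMean_mono_exponent hg hs hsp x r
    _ ≤ ((∫⁻ w, g w ^ p ∂μ) / μ (closedBall x r)) ^ (1 / p) := by
        rw [ballMean, setLAverage_eq]
        gcongr
        exact Measure.restrict_le_self
    _ = _ := by
        rw [measure_closedBall_eq x hr.le, ENNReal.div_rpow_of_nonneg _ _ (by positivity),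
          ENNReal.mul_rpow_of_nonneg _ _ (by positivity), ← ENNReal.rpow_mul, div_eq_mul_inv,
          ENNReal.mul_inv (by simp [hr.not_ge]) (by simp [hr0]), ← ENNReal.rpow_neg,
          ← ENNReal.rpow_neg, mul_one_div]
        ring

theorem exists_meanPotential_le [Nontrivial E] (μ : Measure E) [μ.IsAddHaarMeasure] {q α : ℝ}
    (hs : 0 < s) (hsp : s ≤ p) (hα : 0 < α) (hq : 0 < q) (hpq : 1 / q = 1 / p - α / finrank ℝ E) :
    ∃ C ≠ ∞, ∀ g : E → ℝ≥0∞, Measurable g → ∀ x, meanPotential μ α s g x ≤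
      C * (maximalFunction μ (fun w => g w ^ s) x ^ (p / (s * q)) *
        (∫⁻ w, g w ^ p ∂μ) ^ (α / finrank ℝ E)) := by
  have hp : 0 < p := hs.trans_le hsp
  have hd : (0 : ℝ) < finrank ℝ E := Nat.cast_pos.2 finrank_pos
  have hsum : α + finrank ℝ E / q = finrank ℝ E / p := by
    rw [div_eq_mul_one_div _ q, hpq]
    field_simp
    ring
  refine ⟨ENNReal.ofReal (α⁻¹ + (finrank ℝ E / q)⁻¹) *
    (μ (ball 0 1) ^ (-(1 / p))) ^ (p * α / finrank ℝ E), ?_, fun g hg x => ?_⟩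
  · have : μ (ball 0 1) ^ (-(1 / p)) ≠ ∞ := by
      simp [ENNReal.rpow_eq_top_iff, measure_ball_lt_top.ne,
        (measure_ball_pos μ (0 : E) one_pos).ne']
    finiteness
  refine (setLIntegral_Ioi_rpow_mul_le hα (by positivity : 0 < finrank ℝ E / q)
    (fun r hr => ballMean_le_maximalFunction_rpow μ hs g x hr) fun r hr =>
      hsum.symm ▸ ballMean_le_rpow_mul_rpow_lintegral hs hsp hg x hr).trans_eq ?_
  rw [hsum, ENNReal.mul_rpow_of_nonneg _ _ (by positivity), ← ENNReal.rpow_mul,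
    ← ENNReal.rpow_mul _ (1 / p), show α / (finrank ℝ E / p) = p * α / finrank ℝ E by field_simp,
    show 1 / s * (finrank ℝ E / q / (finrank ℝ E / p)) = p / (s * q) by field_simp,
    show 1 / p * (p * α / finrank ℝ E) = α / finrank ℝ E by field_simp]
  ring

end Hedberg

section SmallRadii

theorem rpow_le_rpow_abs_mul_rpow {a b c : ℝ≥0∞} (hc0 : c ≠ 0) (hc : c ≠ ∞) (hab : a ≤ c * b)
    (hba : b ≤ c * a) (lam : ℝ) : a ^ lam ≤ c ^ |lam| * b ^ lam := by
  rcases le_total 0 lam with hlam | hlam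
  · rw [abs_of_nonneg hlam, ← ENNReal.mul_rpow_of_nonneg _ _ hlam]
    exact ENNReal.rpow_le_rpow hab hlam
  · calc a ^ lam = c ^ |lam| * (c⁻¹ ^ |lam| * a⁻¹ ^ |lam|) := by
          rw [← mul_assoc, ← ENNReal.mul_rpow_of_nonneg _ _ (abs_nonneg _),
            ENNReal.mul_inv_cancel hc0 hc, ENNReal.one_rpow, one_mul, ENNReal.inv_rpow,
            ← ENNReal.rpow_neg, abs_of_nonpos hlam, neg_neg]
      _ = c ^ |lam| * (c * a)⁻¹ ^ |lam| := by
          rw [← ENNReal.mul_rpow_of_nonneg _ _ (abs_nonneg _),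
            ENNReal.mul_inv (.inl hc0) (.inl hc)]
      _ ≤ c ^ |lam| * b⁻¹ ^ |lam| := by gcongr
      _ = c ^ |lam| * b ^ lam := by
          rw [ENNReal.inv_rpow, ← ENNReal.rpow_neg, abs_of_nonpos hlam, neg_neg]

variable {E : Type*} [NormedAddCommGroup E]

theorem enorm_le_two_mul_enorm_of_mem_closedBall {x w : E} {r : ℝ} (hr : r ≤ ‖x‖ / 2)
    (hw : w ∈ closedBall x r) : ‖x‖ₑ ≤ 2 * ‖w‖ₑ ∧ ‖w‖ₑ ≤ 2 * ‖x‖ₑ := by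
  have hwx : ‖w - x‖ ≤ ‖x‖ / 2 := (mem_closedBall_iff_norm.1 hw).trans hr
  have hle : ‖x‖ ≤ 2 * ‖w‖ := by linarith [norm_sub_norm_le x w, norm_sub_rev x w]
  have hge : ‖w‖ ≤ 2 * ‖x‖ := by linarith [norm_sub_norm_le w x, norm_nonneg x]
  simp_rw [← ofReal_norm, ← ENNReal.ofReal_ofNat 2, ← ENNReal.ofReal_mul zero_le_two]
  exact ⟨ENNReal.ofReal_le_ofReal hle, ENNReal.ofReal_le_ofReal hge⟩

variable [MeasurableSpace E] {μ : Measure E} {s : ℝ} {g : E → ℝ≥0∞}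

theorem mul_ballMean (hs : 0 < s) {c : ℝ≥0∞} (hc : c ≠ ∞) (x : E) (r : ℝ) :
    c * ballMean μ s g x r = ballMean μ s (fun w => c * g w) x r := by
  simp_rw [ballMean, ENNReal.mul_rpow_of_nonneg _ _ hs.le, laverage]
  rw [lintegral_const_mul' _ _ (by finiteness),
    ENNReal.mul_rpow_of_nonneg _ _ (by positivity : 0 ≤ 1 / s), ← ENNReal.rpow_mul,
    mul_one_div_cancel hs.ne', ENNReal.rpow_one]

theorem ballMean_mono [OpensMeasurableSpace E] (hs : 0 ≤ s) {h : E → ℝ≥0∞} {x : E} {r : ℝ}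
    (hgh : ∀ w ∈ closedBall x r, g w ≤ h w) : ballMean μ s g x r ≤ ballMean μ s h x r := by
  rw [ballMean, ballMean, setLAverage_eq, setLAverage_eq]
  gcongr ?_ ^ _
  exact ENNReal.div_le_div_right
    (setLIntegral_mono' measurableSet_closedBall fun w hw => ENNReal.rpow_le_rpow (hgh w hw) hs) _

theorem mul_setLIntegral_Ioc_ballMean_le [OpensMeasurableSpace E] (hs : 0 < s) (α lam : ℝ) (x : E) :
    ‖x‖ₑ ^ lam * ∫⁻ r in Ioc 0 (‖x‖ / 2), ENNReal.ofReal r ^ (α - 1) * ballMean μ s g x r ≤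
      2 ^ |lam| * meanPotential μ α s (fun w => ‖w‖ₑ ^ lam * g w) x := by
  rcases eq_or_ne x 0 with rfl | hx
  · simp
  have hxlam : ‖x‖ₑ ^ lam ≠ ∞ := by simp [ENNReal.rpow_eq_top_iff, hx]
  have h2 : (2 : ℝ≥0∞) ^ |lam| ≠ ∞ := by finiteness
  rw [meanPotential, ← lintegral_const_mul' _ _ hxlam, ← lintegral_const_mul' _ _ h2]
  refine (setLIntegral_mono' measurableSet_Ioc fun r hr => ?_).trans
    (lintegral_mono_set Ioc_subset_Ioi_self)
  rw [mul_left_comm, mul_left_comm (2 ^ |lam|), mul_ballMean hs hxlam, mul_ballMean hs h2]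
  gcongr
  refine ballMean_mono hs.le fun w hw => ?_
  obtain ⟨hxw, hwx⟩ := enorm_le_two_mul_enorm_of_mem_closedBall hr.2 hw
  rw [← mul_assoc]
  gcongr
  exact rpow_le_rpow_abs_mul_rpow two_ne_zero ENNReal.ofNat_ne_top hxw hwx lam

end SmallRadii

section BallMoment

variable {E : Type*} [NormedAddCommGroup E] [MeasurableSpace E] {μ : Measure E}

/-- The moment of order `δ` of `u` over the ball `B(0, R)`. -/
def ballMoment (μ : Measure E) (δ : ℝ) (u : E → ℝ≥0∞) (R : ℝ) : ℝ≥0∞ :=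
  ∫⁻ w in ball 0 R, ‖w‖ₑ ^ δ * u w ∂μ

theorem monotone_ballMoment (δ : ℝ) (u : E → ℝ≥0∞) : Monotone (ballMoment μ δ u) :=
  fun _ _ hab => lintegral_mono_set (ball_subset_ball hab)

theorem setLIntegral_ball_eq_ballMoment [NullSingletonClass μ] {p : ℝ} (hp : 0 < p) (lam δ : ℝ)
    (g : E → ℝ≥0∞) (R : ℝ) : ∫⁻ w in ball 0 R, (‖w‖ₑ ^ (lam + δ / p) * g w) ^ p ∂μ =
      ballMoment μ δ (fun w => (‖w‖ₑ ^ lam * g w) ^ p) R := by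
  refine lintegral_congr_ae (ae_restrict_of_ae ?_)
  filter_upwards [Measure.ae_ne μ 0] with w hw
  rw [add_comm, ENNReal.rpow_add _ _ (enorm_ne_zero.2 hw) enorm_ne_top, mul_assoc,
    ENNReal.mul_rpow_of_nonneg _ _ hp.le, ← ENNReal.rpow_mul, div_mul_cancel₀ _ hp.ne']

variable [OpensMeasurableSpace E]

theorem ballMoment_le {δ : ℝ} (hδ : 0 ≤ δ) (u : E → ℝ≥0∞) (R : ℝ) :
    ballMoment μ δ u R ≤ ENNReal.ofReal R ^ δ * ∫⁻ w, u w ∂μ := by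
  rw [← lintegral_const_mul' _ _ (by finiteness)]
  refine (setLIntegral_mono' measurableSet_ball fun w hw => ?_).trans
    (setLIntegral_le_lintegral _ _)
  rw [← ofReal_norm]
  gcongr
  exact (mem_ball_zero_iff.1 hw).le

theorem ballMoment_rpow_le {p q θ δ : ℝ} (hq : 0 < q) (hθ : 0 ≤ θ) (hpq : 1 / p = 1 / q + θ)
    (hδ : 0 ≤ δ) (u : E → ℝ≥0∞) (R : ℝ) : ballMoment μ δ u R ^ (1 / p) ≤
      ballMoment μ δ u R ^ (1 / q) * (ENNReal.ofReal R ^ (δ * θ) * (∫⁻ w, u w ∂μ) ^ θ) := by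
  rw [hpq, ENNReal.rpow_add_of_nonneg _ _ (by positivity) hθ, ENNReal.rpow_mul,
    ← ENNReal.mul_rpow_of_nonneg _ _ hθ]
  gcongr
  exact ballMoment_le hδ u R

end BallMoment

section LargeRadii

open Module

theorem rpow_setLIntegral_Ioi_rpow_mul_le {q κ : ℝ} (hq : 1 < q) (hκ : 0 < κ) {v : ℝ → ℝ≥0∞}
    (hv : Measurable v) {ρ : ℝ} (hρ : 0 < ρ) :
    (∫⁻ r in Ioi ρ, ENNReal.ofReal r ^ (-(2 * κ) - 1) * v r) ^ q ≤
      ENNReal.ofReal (κ * q / (q - 1))⁻¹ ^ (q - 1) * (ENNReal.ofReal ρ ^ (-(κ * q)) *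
        ∫⁻ r in Ioi ρ, ENNReal.ofReal r ^ (-(κ * q) - 1) * v r ^ q) := by
  have hq0 : 0 < q := one_pos.trans hq
  have hq1 : 0 < q - 1 := sub_pos.2 hq
  have hHolder := ENNReal.lintegral_mul_le_Lp_mul_Lq (volume.restrict (Ioi ρ))
    (Real.HolderConjugate.conjExponent hq)
    (f := fun r => ENNReal.ofReal r ^ (-κ - 1 / q) * v r)
    (g := fun r => ENNReal.ofReal r ^ (-κ - (q - 1) / q)) (by fun_prop) (by fun_prop)
  have hsplit : ∫⁻ r in Ioi ρ, ENNReal.ofReal r ^ (-(2 * κ) - 1) * v r =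
      ∫⁻ r in Ioi ρ, ENNReal.ofReal r ^ (-κ - 1 / q) * v r *
        ENNReal.ofReal r ^ (-κ - (q - 1) / q) := by
    refine setLIntegral_congr_fun measurableSet_Ioi fun r hr => ?_
    rw [mul_right_comm, ← ENNReal.rpow_add _ _ (ENNReal.ofReal_pos.2 (hρ.trans hr)).ne'
      ENNReal.ofReal_ne_top]
    congr 2
    field_simp
    ring
  simp only [Pi.mul_apply, ← ENNReal.rpow_mul, ENNReal.mul_rpow_of_nonneg _ _ hq0.le,
    Real.conjExponent] at hHolder
  rw [← hsplit, show (-κ - (q - 1) / q) * (q / (q - 1)) = -(κ * q / (q - 1)) - 1 by field_simp,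
    setLIntegral_Ioi_rpow (by positivity) hρ,
    show (-κ - 1 / q) * q = -(κ * q) - 1 by field_simp] at hHolder
  refine (ENNReal.rpow_le_rpow hHolder hq0.le).trans_eq ?_
  rw [ENNReal.mul_rpow_of_nonneg _ _ hq0.le, ← ENNReal.rpow_mul, ← ENNReal.rpow_mul,
    one_div_mul_cancel hq0.ne', ENNReal.rpow_one, show 1 / (q / (q - 1)) * q = q - 1 by field_simp,
    ENNReal.mul_rpow_of_nonneg _ _ hq1.le, ← ENNReal.rpow_mul,
    show -(κ * q / (q - 1)) * (q - 1) = -(κ * q) by field_simp]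
  ring

variable {E : Type*} [NormedAddCommGroup E] [NormedSpace ℝ E] [FiniteDimensional ℝ E]
  [MeasurableSpace E] [BorelSpace E] {μ : Measure E} [μ.IsAddHaarMeasure]

theorem setLIntegral_ball_enorm_rpow [Nontrivial E] {b : ℝ} (hb : 0 < b) {R : ℝ} (hR : 0 ≤ R) :
    ∫⁻ w in ball (0 : E) R, ‖w‖ₑ ^ (b - finrank ℝ E) ∂μ =
      μ.toSphere univ * ENNReal.ofReal b⁻¹ * ENNReal.ofReal R ^ b := by
  have hpolar := lintegral_fun_direction_mul_fun_norm μ (Φ := fun _ : E => 1) measurable_const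
    (G := (Iio R).indicator fun r => ENNReal.ofReal r ^ (b - finrank ℝ E))
    (Measurable.indicator (by fun_prop) measurableSet_Iio)
  calc ∫⁻ w in ball (0 : E) R, ‖w‖ₑ ^ (b - finrank ℝ E) ∂μ
      = ∫⁻ w, 1 * (Iio R).indicator (fun r => ENNReal.ofReal r ^ (b - finrank ℝ E)) ‖w‖ ∂μ := by
        rw [← lintegral_indicator measurableSet_ball]
        simp [indicator]
    _ = μ.toSphere univ * ∫⁻ r in Ioi (0 : ℝ), (Iio R).indicator
          (fun r => ENNReal.ofReal r ^ (finrank ℝ E - 1 : ℝ) *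
            ENNReal.ofReal r ^ (b - finrank ℝ E)) r := by
        rw [hpolar, lintegral_one]
        simp_rw [indicator_mul_right]
    _ = μ.toSphere univ * ∫⁻ r in Ioc 0 R, ENNReal.ofReal r ^ (b - 1) := by
        rw [setLIntegral_indicator measurableSet_Iio, inter_comm, Ioi_inter_Iio,
          setLIntegral_congr Ioo_ae_eq_Ioc]
        congr 1
        refine setLIntegral_congr_fun measurableSet_Ioc fun r hr => ?_
        rw [← ENNReal.rpow_add _ _ (ENNReal.ofReal_pos.2 hr.1).ne' ENNReal.ofReal_ne_top]
        ring_nf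
    _ = _ := by rw [setLIntegral_Ioc_rpow hb hR, mul_assoc]

theorem exists_rpow_setLIntegral_ball_rpow_le [Nontrivial E] (μ : Measure E) [μ.IsAddHaarMeasure]
    {s p γ : ℝ} (hs : 0 < s) (hsp : s < p) (hγ : γ < finrank ℝ E * (1 / s - 1 / p)) :
    ∃ C ≠ ∞, ∀ g : E → ℝ≥0∞, Measurable g → ∀ R > 0, (∫⁻ w in ball 0 R, g w ^ s ∂μ) ^ (1 / s) ≤
      C * (ENNReal.ofReal R ^ (finrank ℝ E * (1 / s - 1 / p) - γ) *
        (∫⁻ w in ball 0 R, (‖w‖ₑ ^ γ * g w) ^ p ∂μ) ^ (1 / p)) := by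
  have hθ : 0 < 1 / s - 1 / p := sub_pos.2 (one_div_lt_one_div_of_lt hs hsp)
  set θ := 1 / s - 1 / p
  have hb : 0 < finrank ℝ E - γ * θ⁻¹ := by
    rw [sub_pos, ← div_eq_mul_inv, div_lt_iff₀ hθ]
    exact hγ
  refine ⟨(μ.toSphere univ * ENNReal.ofReal (finrank ℝ E - γ * θ⁻¹)⁻¹) ^ θ, by finiteness,
    fun g hg R hR => ?_⟩
  have hcancel : ∫⁻ w in ball 0 R, g w ^ s ∂μ =
      ∫⁻ w in ball 0 R, (‖w‖ₑ ^ γ * g w * ‖w‖ₑ ^ (-γ)) ^ s ∂μ := by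
    refine lintegral_congr_ae (ae_restrict_of_ae ?_)
    filter_upwards [Measure.ae_ne μ 0] with w hw
    rw [mul_right_comm, ← ENNReal.rpow_add _ _ (enorm_ne_zero.2 hw) enorm_ne_top,
      add_neg_cancel, ENNReal.rpow_zero, one_mul]
  have hHolder := ENNReal.lintegral_Lp_mul_le_Lq_mul_Lr hs hsp (r := θ⁻¹)
    (by rw [one_div θ⁻¹, inv_inv]; ring) (μ.restrict (ball 0 R))
    (f := fun w => ‖w‖ₑ ^ γ * g w) (g := fun w => ‖w‖ₑ ^ (-γ)) (by fun_prop) (by fun_prop)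
  rw [hcancel]
  refine hHolder.trans_eq ?_
  simp_rw [← ENNReal.rpow_mul]
  rw [show -γ * θ⁻¹ = (finrank ℝ E - γ * θ⁻¹) - finrank ℝ E by ring,
    setLIntegral_ball_enorm_rpow hb hR.le, one_div θ⁻¹, inv_inv,
    ENNReal.mul_rpow_of_nonneg _ _ hθ.le, ← ENNReal.rpow_mul,
    show (finrank ℝ E - γ * θ⁻¹) * θ = finrank ℝ E * θ - γ by field_simp]
  ring

theorem exists_ballMean_le_of_norm_lt [Nontrivial E] (μ : Measure E) [μ.IsAddHaarMeasure]
    {s p γ : ℝ} (hs : 0 < s) (hsp : s < p) (hγ : γ < finrank ℝ E * (1 / s - 1 / p)) :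
    ∃ C ≠ ∞, ∀ g : E → ℝ≥0∞, Measurable g → ∀ (x : E) (r : ℝ), ‖x‖ < 2 * r →
      ballMean μ s g x r ≤ C * (ENNReal.ofReal r ^ (-(finrank ℝ E / p) - γ) *
        (∫⁻ w in ball 0 (3 * r), (‖w‖ₑ ^ γ * g w) ^ p ∂μ) ^ (1 / p)) := by
  obtain ⟨C, hC, hCball⟩ := exists_rpow_setLIntegral_ball_rpow_le μ hs hsp hγ
  have hs' : 0 ≤ 1 / s := by positivity
  have hμ : μ (ball 0 1) ^ (-(1 / s)) ≠ ∞ := by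
    simp [ENNReal.rpow_eq_top_iff, measure_ball_lt_top.ne,
      (measure_ball_pos μ (0 : E) one_pos).ne']
  refine ⟨μ (ball 0 1) ^ (-(1 / s)) * (C * 3 ^ (finrank ℝ E * (1 / s - 1 / p) - γ)),
    by finiteness, fun g hg x r hxr => ?_⟩
  have hr : 0 < r := by linarith [norm_nonneg x]
  have hr0 : ENNReal.ofReal r ≠ 0 := (ENNReal.ofReal_pos.2 hr).ne'
  have hsub : closedBall x r ⊆ ball 0 (3 * r) :=
    closedBall_subset_ball' (by rw [dist_zero_right]; linarith)
  calc ballMean μ s g x r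
      = ENNReal.ofReal r ^ (-(finrank ℝ E / s)) * μ (ball 0 1) ^ (-(1 / s)) *
          (∫⁻ w in closedBall x r, g w ^ s ∂μ) ^ (1 / s) := by
        rw [ballMean, setLAverage_eq, measure_closedBall_eq x hr.le, div_eq_mul_inv,
          ENNReal.mul_rpow_of_nonneg _ _ hs', ENNReal.inv_rpow, ← ENNReal.rpow_neg,
          ENNReal.mul_rpow_of_ne_top (by finiteness) (by finiteness), ← ENNReal.rpow_mul,
          mul_neg, mul_one_div, mul_comm]
    _ ≤ ENNReal.ofReal r ^ (-(finrank ℝ E / s)) * μ (ball 0 1) ^ (-(1 / s)) *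
          (C * (ENNReal.ofReal (3 * r) ^ (finrank ℝ E * (1 / s - 1 / p) - γ) *
            (∫⁻ w in ball 0 (3 * r), (‖w‖ₑ ^ γ * g w) ^ p ∂μ) ^ (1 / p))) := by
        gcongr
        refine (ENNReal.rpow_le_rpow (lintegral_mono_set hsub) hs').trans ?_
        exact hCball g hg (3 * r) (by positivity)
    _ = _ := by
        rw [ENNReal.ofReal_mul zero_le_three, ENNReal.ofReal_ofNat,
          ENNReal.mul_rpow_of_nonneg _ _ (sub_pos.2 hγ).le,
          show -(finrank ℝ E / p) - γ =
            -(finrank ℝ E / s) + (finrank ℝ E * (1 / s - 1 / p) - γ) by ring,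
          ENNReal.rpow_add _ _ hr0 ENNReal.ofReal_ne_top]
        ring

theorem exists_rpow_mul_ballMean_le [Nontrivial E] (μ : Measure E) [μ.IsAddHaarMeasure]
    {s p q α lam δ : ℝ} (hs : 0 < s) (hsp : s < p) (hα : 0 ≤ α) (hq : 0 < q)
    (hpq : 1 / q = 1 / p - α / finrank ℝ E) (hδ : 0 ≤ δ)
    (hlamδ : lam + δ / p < finrank ℝ E * (1 / s - 1 / p)) :
    ∃ C ≠ ∞, ∀ g : E → ℝ≥0∞, Measurable g → ∀ (x : E) (r : ℝ), ‖x‖ < 2 * r →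
      ENNReal.ofReal r ^ (α - 1) * ballMean μ s g x r ≤
        C * (∫⁻ w, (‖w‖ₑ ^ lam * g w) ^ p ∂μ) ^ (α / finrank ℝ E) *
          (ENNReal.ofReal r ^ (-(lam + finrank ℝ E / q) - 1) * (ENNReal.ofReal r ^ (-δ) *
            ballMoment μ δ (fun w => (‖w‖ₑ ^ lam * g w) ^ p) (3 * r)) ^ (1 / q)) := by
  have hp : 0 < p := hs.trans hsp
  have hd : (0 : ℝ) < finrank ℝ E := Nat.cast_pos.2 finrank_pos
  have hθ : 0 ≤ α / finrank ℝ E := by positivity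
  obtain ⟨C, hC, hCmean⟩ := exists_ballMean_le_of_norm_lt μ hs hsp hlamδ
  refine ⟨C * 3 ^ (δ * (α / finrank ℝ E)), by finiteness, fun g hg x r hxr => ?_⟩
  have hr : 0 < r := by linarith [norm_nonneg x]
  have hr0 : ENNReal.ofReal r ≠ 0 := (ENNReal.ofReal_pos.2 hr).ne'
  have hexp : -(lam + finrank ℝ E / q) - 1 + -δ * (1 / q) =
      (α - 1) + (-(finrank ℝ E / p) - (lam + δ / p)) + δ * (α / finrank ℝ E) := by
    rw [div_eq_mul_one_div _ q, hpq]
    field_simp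
    ring
  set u : E → ℝ≥0∞ := fun w => (‖w‖ₑ ^ lam * g w) ^ p
  calc ENNReal.ofReal r ^ (α - 1) * ballMean μ s g x r
      ≤ ENNReal.ofReal r ^ (α - 1) * (C * (ENNReal.ofReal r ^ (-(finrank ℝ E / p) - (lam + δ / p)) *
          ballMoment μ δ u (3 * r) ^ (1 / p))) := by
        gcongr
        rw [← setLIntegral_ball_eq_ballMoment hp]
        exact hCmean g hg x r hxr
    _ ≤ ENNReal.ofReal r ^ (α - 1) * (C * (ENNReal.ofReal r ^ (-(finrank ℝ E / p) - (lam + δ / p)) *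
          (ballMoment μ δ u (3 * r) ^ (1 / q) *
            (ENNReal.ofReal (3 * r) ^ (δ * (α / finrank ℝ E)) *
              (∫⁻ w, u w ∂μ) ^ (α / finrank ℝ E))))) := by
        gcongr
        exact ballMoment_rpow_le hq hθ (by rw [hpq]; ring) hδ u (3 * r)
    _ = _ := by
        rw [ENNReal.mul_rpow_of_nonneg _ _ (by positivity : 0 ≤ 1 / q), ← ENNReal.rpow_mul,
          ← mul_assoc (ENNReal.ofReal r ^ (-(lam + finrank ℝ E / q) - 1)),
          ← ENNReal.rpow_add _ _ hr0 ENNReal.ofReal_ne_top, hexp,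
          ENNReal.rpow_add _ _ hr0 ENNReal.ofReal_ne_top,
          ENNReal.rpow_add _ _ hr0 ENNReal.ofReal_ne_top, ENNReal.ofReal_mul zero_le_three,
          ENNReal.ofReal_ofNat, ENNReal.mul_rpow_of_nonneg _ _ (by positivity)]
        ring

theorem exists_rpow_mul_setLIntegral_Ioi_ballMean_le [Nontrivial E] (μ : Measure E)
    [μ.IsAddHaarMeasure] {s p q α lam δ : ℝ} (hs : 0 < s) (hsp : s < p) (hα : 0 ≤ α) (hq : 1 < q)
    (hpq : 1 / q = 1 / p - α / finrank ℝ E) (hδ : 0 ≤ δ)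
    (hlamδ : lam + δ / p < finrank ℝ E * (1 / s - 1 / p)) {κ : ℝ} (hκ : 0 < κ)
    (hlam : lam + finrank ℝ E / q = 2 * κ) :
    ∃ C ≠ ∞, ∀ g : E → ℝ≥0∞, Measurable g → ∀ x ≠ 0,
      (‖x‖ₑ ^ lam * ∫⁻ r in Ioi (‖x‖ / 2), ENNReal.ofReal r ^ (α - 1) * ballMean μ s g x r) ^ q ≤
        C * (∫⁻ w, (‖w‖ₑ ^ lam * g w) ^ p ∂μ) ^ (α / finrank ℝ E * q) *
          (‖x‖ₑ ^ (κ * q - finrank ℝ E) * ∫⁻ r in Ioi (‖x‖ / 2), ENNReal.ofReal r ^ (-(κ * q) - 1) *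
            (ENNReal.ofReal r ^ (-δ) *
              ballMoment μ δ (fun w => (‖w‖ₑ ^ lam * g w) ^ p) (3 * r))) := by
  have hq0 : 0 < q := one_pos.trans hq
  obtain ⟨C, hC, hCmean⟩ := exists_rpow_mul_ballMean_le μ hs hsp hα hq0 hpq hδ hlamδ
  refine ⟨C ^ q * ENNReal.ofReal (κ * q / (q - 1))⁻¹ ^ (q - 1) * 2⁻¹ ^ (-(κ * q)), ?_,
    fun g hg x hx => ?_⟩
  · have : (2⁻¹ : ℝ≥0∞) ^ (-(κ * q)) ≠ ∞ := by simp [ENNReal.rpow_eq_top_iff]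
    have := sub_pos.2 hq
    finiteness
  have hexp : κ * q - finrank ℝ E = lam * q + -(κ * q) := by
    field_simp at hlam
    linarith
  set u : E → ℝ≥0∞ := fun w => (‖w‖ₑ ^ lam * g w) ^ p
  set v : ℝ → ℝ≥0∞ := fun r => ENNReal.ofReal r ^ (-δ) * ballMoment μ δ u (3 * r)
  have hvmeas : Measurable v := by
    have := (monotone_ballMoment (μ := μ) δ u).measurable
    fun_prop
  calc _ ≤ (‖x‖ₑ ^ lam * (C * (∫⁻ w, u w ∂μ) ^ (α / finrank ℝ E) *
          ∫⁻ r in Ioi (‖x‖ / 2), ENNReal.ofReal r ^ (-(2 * κ) - 1) * v r ^ (1 / q))) ^ q := by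
        rw [← lintegral_const_mul (C * (∫⁻ w, u w ∂μ) ^ (α / finrank ℝ E))
          (by fun_prop : Measurable fun r => ENNReal.ofReal r ^ (-(2 * κ) - 1) * v r ^ (1 / q)),
          ← hlam]
        gcongr ?_ ^ _
        refine mul_le_mul_right (setLIntegral_mono' measurableSet_Ioi fun r hr => ?_) _
        exact hCmean g hg x r (by linarith [mem_Ioi.1 hr])
    _ = ‖x‖ₑ ^ (lam * q) * (C ^ q * (∫⁻ w, u w ∂μ) ^ (α / finrank ℝ E * q)) *
          (∫⁻ r in Ioi (‖x‖ / 2), ENNReal.ofReal r ^ (-(2 * κ) - 1) * v r ^ (1 / q)) ^ q := by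
        simp_rw [ENNReal.mul_rpow_of_nonneg _ _ hq0.le, ← ENNReal.rpow_mul]
        ring
    _ ≤ _ := mul_le_mul_right (rpow_setLIntegral_Ioi_rpow_mul_le hq hκ (by fun_prop)
          (by positivity : 0 < ‖x‖ / 2)) _
    _ = _ := by
        simp_rw [← ENNReal.rpow_mul, one_div_mul_cancel hq0.ne', ENNReal.rpow_one]
        rw [hexp, ENNReal.rpow_add _ _ (enorm_ne_zero.2 hx) enorm_ne_top, div_eq_mul_inv ‖x‖,
          ENNReal.ofReal_mul (norm_nonneg x), ofReal_norm, ENNReal.ofReal_inv_of_pos two_pos,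
          ENNReal.ofReal_ofNat, ENNReal.mul_rpow_of_ne_top enorm_ne_top (by finiteness)]
        ring

end LargeRadii

section Hardy

open Module

section Tonelli

variable {E : Type*} [NormedAddCommGroup E] [MeasurableSpace E] [OpensMeasurableSpace E]
  {μ : Measure E} [SFinite μ]

theorem lintegral_mul_setLIntegral_Ioi_norm_div {a : ℝ} (ha : 0 < a) {φ : E → ℝ≥0∞}
    (hφ : Measurable φ) {v : ℝ → ℝ≥0∞} (hv : Measurable v) :
    ∫⁻ x, φ x * (∫⁻ r in Ioi (‖x‖ / a), v r) ∂μ =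
      ∫⁻ r in Ioi 0, v r * ∫⁻ x in ball 0 (a * r), φ x ∂μ := by
  have hset : MeasurableSet {z : E × ℝ | ‖z.1‖ / a < z.2} :=
    measurableSet_lt (by fun_prop) measurable_snd
  have hswap := lintegral_lintegral_swap (μ := μ) (ν := volume)
    (f := fun x r => {z : E × ℝ | ‖z.1‖ / a < z.2}.indicator (fun z => φ z.1 * v z.2) (x, r))
    (Measurable.indicator (by fun_prop) hset).aemeasurable
  have hleft (x : E) : ∫⁻ r, {z : E × ℝ | ‖z.1‖ / a < z.2}.indicator
      (fun z => φ z.1 * v z.2) (x, r) = φ x * ∫⁻ r in Ioi (‖x‖ / a), v r := by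
    rw [← lintegral_const_mul _ hv, ← lintegral_indicator measurableSet_Ioi]
    rfl
  have hright (r : ℝ) : ∫⁻ x, {z : E × ℝ | ‖z.1‖ / a < z.2}.indicator
      (fun z => φ z.1 * v z.2) (x, r) ∂μ = v r * ∫⁻ x in ball 0 (a * r), φ x ∂μ := by
    rw [← lintegral_const_mul _ hφ, ← lintegral_indicator measurableSet_ball]
    simp only [indicator, mem_ofPred_eq, mem_ball_zero_iff, div_lt_iff₀' ha, mul_comm (φ _)]
  simp_rw [hleft, hright] at hswap
  rw [hswap]
  refine (setLIntegral_eq_of_support_subset fun r hr => ?_).symm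
  by_contra hr0
  have hball : ball (0 : E) (a * r) = ∅ :=
    ball_eq_empty.2 (mul_nonpos_of_nonneg_of_nonpos ha.le (not_lt.1 hr0))
  exact hr (by simp [hball])

theorem setLIntegral_Ioi_rpow_mul_ballMoment [NullSingletonClass μ] {δ a : ℝ} (hδ : 0 < δ)
    (ha : 0 < a) {u : E → ℝ≥0∞} (hu : Measurable u) :
    ∫⁻ r in Ioi 0, ENNReal.ofReal r ^ (-δ - 1) * ballMoment μ δ u (a * r) =
      ENNReal.ofReal δ⁻¹ * ENNReal.ofReal a ^ δ * ∫⁻ w, u w ∂μ := by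
  rw [← lintegral_const_mul _ hu]
  refine (lintegral_mul_setLIntegral_Ioi_norm_div ha (φ := fun w => ‖w‖ₑ ^ δ * u w)
    (by fun_prop) (by fun_prop)).symm.trans (lintegral_congr_ae ?_)
  filter_upwards [Measure.ae_ne μ 0] with w hw
  have hw0 : 0 < ‖w‖ := norm_pos_iff.2 hw
  have hcancel : ‖w‖ₑ ^ δ * ENNReal.ofReal (‖w‖ / a) ^ (-δ) = ENNReal.ofReal a ^ δ := by
    rw [← ofReal_norm, ENNReal.ofReal_rpow_of_pos hw0, ENNReal.ofReal_rpow_of_pos (by positivity),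
      ENNReal.ofReal_rpow_of_pos ha, ← ENNReal.ofReal_mul (by positivity),
      Real.rpow_neg (by positivity), Real.div_rpow hw0.le ha.le, inv_div,
      mul_div_cancel₀ _ (by positivity)]
  rw [setLIntegral_Ioi_rpow hδ (by positivity), ← hcancel]
  ring

end Tonelli

variable {E : Type*} [NormedAddCommGroup E] [NormedSpace ℝ E] [FiniteDimensional ℝ E]
  [Nontrivial E] [MeasurableSpace E] [BorelSpace E] (μ : Measure E) [μ.IsAddHaarMeasure]

theorem exists_lintegral_rpow_mul_setLIntegral_Ioi_ballMoment_le {c δ : ℝ} (hc : 0 < c)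
    (hδ : 0 < δ) : ∃ C ≠ ∞, ∀ u : E → ℝ≥0∞, Measurable u →
      ∫⁻ x, ‖x‖ₑ ^ (c - finrank ℝ E) * (∫⁻ r in Ioi (‖x‖ / 2), ENNReal.ofReal r ^ (-c - 1) *
        (ENNReal.ofReal r ^ (-δ) * ballMoment μ δ u (3 * r))) ∂μ ≤ C * ∫⁻ w, u w ∂μ := by
  refine ⟨μ.toSphere univ * ENNReal.ofReal c⁻¹ * 2 ^ c *
    (ENNReal.ofReal δ⁻¹ * ENNReal.ofReal 3 ^ δ), by finiteness, fun u hu => ?_⟩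
  have hmoment := (monotone_ballMoment (μ := μ) δ u).measurable
  rw [lintegral_mul_setLIntegral_Ioi_norm_div two_pos (by fun_prop) (by fun_prop),
    mul_assoc _ _ (∫⁻ w, u w ∂μ), ← setLIntegral_Ioi_rpow_mul_ballMoment hδ three_pos hu,
    ← lintegral_const_mul _ (by fun_prop)]
  refine (setLIntegral_congr_fun measurableSet_Ioi fun r hr => ?_).le
  have hr0 : ENNReal.ofReal r ≠ 0 := (ENNReal.ofReal_pos.2 hr).ne'
  have hpow : ENNReal.ofReal r ^ (-δ - 1) =
      ENNReal.ofReal r ^ (-c - 1) * ENNReal.ofReal r ^ (-δ) * ENNReal.ofReal r ^ c := by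
    simp_rw [← ENNReal.rpow_add _ _ hr0 ENNReal.ofReal_ne_top]
    ring_nf
  rw [setLIntegral_ball_enorm_rpow hc (by linarith [mem_Ioi.1 hr]), hpow,
    ENNReal.ofReal_mul zero_le_two, ENNReal.ofReal_ofNat, ENNReal.mul_rpow_of_nonneg _ _ hc.le]
  ring

end Hardy

section WeightedPotential

open Module

theorem measurable_setLIntegral_Ioi (v : ℝ → ℝ≥0∞) : Measurable fun ρ => ∫⁻ r in Ioi ρ, v r :=
  Antitone.measurable fun _ _ hab => lintegral_mono_set (Ioi_subset_Ioi hab)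

variable {E : Type*} [NormedAddCommGroup E] [MeasurableSpace E]

theorem meanPotential_eq_add (μ : Measure E) (α s : ℝ) (g : E → ℝ≥0∞) (x : E) {R : ℝ}
    (hR : 0 ≤ R) : meanPotential μ α s g x =
      (∫⁻ r in Ioc 0 R, ENNReal.ofReal r ^ (α - 1) * ballMean μ s g x r) +
        ∫⁻ r in Ioi R, ENNReal.ofReal r ^ (α - 1) * ballMean μ s g x r := by
  rw [meanPotential, ← Ioc_union_Ioi_eq_Ioi hR,
    lintegral_union measurableSet_Ioi Ioc_disjoint_Ioi_same]

variable [NormedSpace ℝ E] [FiniteDimensional ℝ E] [Nontrivial E] [BorelSpace E]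
  (μ : Measure E) [μ.IsAddHaarMeasure] {s p q α lam : ℝ}

theorem exists_rpow_mul_setLIntegral_Ioc_ballMean_le (hs : 0 < s) (hsp : s ≤ p) (hα : 0 < α)
    (hq : 0 < q) (hpq : 1 / q = 1 / p - α / finrank ℝ E) (lam : ℝ) :
    ∃ C ≠ ∞, ∀ g : E → ℝ≥0∞, Measurable g → ∀ x,
      (‖x‖ₑ ^ lam * ∫⁻ r in Ioc 0 (‖x‖ / 2), ENNReal.ofReal r ^ (α - 1) * ballMean μ s g x r) ^ q ≤
        C * (∫⁻ w, (‖w‖ₑ ^ lam * g w) ^ p ∂μ) ^ (α / finrank ℝ E * q) *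
          maximalFunction μ (fun w => (‖w‖ₑ ^ lam * g w) ^ s) x ^ (p / s) := by
  obtain ⟨C, hC, hCpotential⟩ := exists_meanPotential_le μ hs hsp hα hq hpq
  refine ⟨(2 ^ |lam| * C) ^ q, by finiteness, fun g hg x => ?_⟩
  refine (ENNReal.rpow_le_rpow ((mul_setLIntegral_Ioc_ballMean_le hs α lam x).trans
    (mul_le_mul_right (hCpotential _ (by fun_prop) x) _)) hq.le).trans_eq ?_
  simp_rw [ENNReal.mul_rpow_of_nonneg _ _ hq.le, ← ENNReal.rpow_mul]
  rw [show p / (s * q) * q = p / s by field_simp]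
  ring

theorem exists_rpow_mul_meanPotential_le {δ : ℝ} (hs : 0 < s) (hsp : s < p) (hα : 0 < α)
    (hq : 1 < q) (hpq : 1 / q = 1 / p - α / finrank ℝ E) (hδ : 0 ≤ δ)
    (hlamδ : lam + δ / p < finrank ℝ E * (1 / s - 1 / p)) {κ : ℝ} (hκ : 0 < κ)
    (hlam : lam + finrank ℝ E / q = 2 * κ) :
    ∃ C ≠ ∞, ∀ g : E → ℝ≥0∞, Measurable g → ∀ x ≠ 0,
      (‖x‖ₑ ^ lam * meanPotential μ α s g x) ^ q ≤
        C * (∫⁻ w, (‖w‖ₑ ^ lam * g w) ^ p ∂μ) ^ (α / finrank ℝ E * q) *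
          (maximalFunction μ (fun w => (‖w‖ₑ ^ lam * g w) ^ s) x ^ (p / s) +
            ‖x‖ₑ ^ (κ * q - finrank ℝ E) * ∫⁻ r in Ioi (‖x‖ / 2),
              ENNReal.ofReal r ^ (-(κ * q) - 1) * (ENNReal.ofReal r ^ (-δ) *
                ballMoment μ δ (fun w => (‖w‖ₑ ^ lam * g w) ^ p) (3 * r))) := by
  obtain ⟨C₁, hC₁, hsmall⟩ :=
    exists_rpow_mul_setLIntegral_Ioc_ballMean_le μ hs hsp.le hα (one_pos.trans hq) hpq lam
  obtain ⟨C₂, hC₂, hlarge⟩ :=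
    exists_rpow_mul_setLIntegral_Ioi_ballMean_le μ hs hsp hα.le hq hpq hδ hlamδ hκ hlam
  have : 0 ≤ q - 1 := by linarith
  refine ⟨2 ^ (q - 1) * (C₁ + C₂), by finiteness, fun g hg x hx => ?_⟩
  rw [meanPotential_eq_add μ α s g x (by positivity : 0 ≤ ‖x‖ / 2), mul_add]
  refine (ENNReal.rpow_add_le_mul_rpow_add_rpow _ _ hq.le).trans ?_
  refine (mul_le_mul_right (add_le_add (hsmall g hg x) (hlarge g hg x hx)) _).trans ?_
  rw [mul_assoc (2 ^ (q - 1)), mul_assoc (2 ^ (q - 1)), mul_add ((C₁ + C₂) * _)]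
  gcongr
  · exact le_self_add
  · exact le_add_self

theorem exists_lintegral_rpow_mul_meanPotential_le {δ : ℝ} (hs : 0 < s) (hsp : s < p) (hα : 0 < α)
    (hq : 1 < q) (hpq : 1 / q = 1 / p - α / finrank ℝ E) (hδ : 0 < δ)
    (hlamδ : lam + δ / p < finrank ℝ E * (1 / s - 1 / p)) (hlam : 0 < lam + finrank ℝ E / q) :
    ∃ C ≠ ∞, ∀ g : E → ℝ≥0∞, Measurable g →
      ∫⁻ x, (‖x‖ₑ ^ lam * meanPotential μ α s g x) ^ q ∂μ ≤
        C * (∫⁻ w, (‖w‖ₑ ^ lam * g w) ^ p ∂μ) ^ (q / p) := by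
  have hq0 : 0 < q := one_pos.trans hq
  have hd : (0 : ℝ) < finrank ℝ E := Nat.cast_pos.2 finrank_pos
  set κ := (lam + finrank ℝ E / q) / 2 with hκ
  obtain ⟨C₀, hC₀, hpoint⟩ := exists_rpow_mul_meanPotential_le μ hs hsp hα hq hpq hδ.le hlamδ
    (κ := κ) (by positivity) (by rw [hκ]; ring)
  obtain ⟨C₁, hC₁, hmax⟩ := exists_lintegral_maximalFunction_rpow_le μ ((one_lt_div hs).2 hsp)
  obtain ⟨C₂, hC₂, hHardy⟩ := exists_lintegral_rpow_mul_setLIntegral_Ioi_ballMoment_le μ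
    (c := κ * q) (by positivity) hδ
  refine ⟨C₀ * (C₁ + C₂), by finiteness, fun g hg => ?_⟩
  set h : E → ℝ≥0∞ := fun w => ‖w‖ₑ ^ lam * g w
  have hmaxmeas := measurable_maximalFunction (μ := μ) fun w => h w ^ s
  have htail : Measurable fun x : E => ∫⁻ r in Ioi (‖x‖ / 2), ENNReal.ofReal r ^ (-(κ * q) - 1) *
      (ENNReal.ofReal r ^ (-δ) * ballMoment μ δ (fun w => h w ^ p) (3 * r)) :=
    (measurable_setLIntegral_Ioi _).comp (by fun_prop : Measurable fun x : E => ‖x‖ / 2)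
  have hpower : q / p = α / finrank ℝ E * q + 1 := by
    have : q * (1 / q) = q * (1 / p - α / finrank ℝ E) := by rw [hpq]
    rw [mul_one_div_cancel hq0.ne'] at this
    linarith [mul_one_div q p]
  refine (lintegral_mono_ae ((Measure.ae_ne μ 0).mono fun x hx => hpoint g hg x hx)).trans ?_
  rw [lintegral_const_mul _ (by fun_prop), lintegral_add_left (by fun_prop), hpower,
    ENNReal.rpow_add_of_nonneg _ _ (by positivity) zero_le_one, ENNReal.rpow_one]
  refine (mul_le_mul_right (add_le_add (hmax _ (by fun_prop)) (hHardy _ (by fun_prop))) _).trans_eq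
    ?_
  simp_rw [← ENNReal.rpow_mul, mul_div_cancel₀ p hs.ne']
  ring

end WeightedPotential

section RoughSobolev

open Module

theorem exists_exponent_between {d p lam : ℝ} (hd : 0 < d) (hdp : d < p) (hlam : lam < 1 - d / p) :
    ∃ s δ : ℝ, d < s ∧ s < p ∧ 0 < δ ∧ lam + δ / p < d * (1 / s - 1 / p) := by
  have hp : 0 < p := hd.trans hdp
  obtain ⟨m, hm, hm1⟩ : ∃ m, max (d / p) (lam + d / p) < m ∧ m < 1 :=
    exists_between (max_lt ((div_lt_one hp).2 hdp) (by linarith))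
  obtain ⟨hdm, hlm⟩ := max_lt_iff.1 hm
  have hm0 : 0 < m := (by positivity : 0 < d / p).trans hdm
  obtain ⟨ε, hε, hεm⟩ := exists_between (show 0 < m - d / p - lam by linarith)
  refine ⟨d / m, ε * p, ?_, ?_, by positivity, ?_⟩
  · exact (lt_div_iff₀ hm0).2 (mul_lt_of_lt_one_right hd hm1)
  · exact (div_lt_comm₀ hp hm0).1 hdm
  · rw [mul_div_cancel_right₀ _ hp.ne', mul_sub, mul_one_div, mul_one_div, div_div_cancel₀ hd.ne']
    linarith

theorem one_lt_of_one_div_eq_sub {d p q α : ℝ} (hd : 1 ≤ d) (hα : 0 < α) (hp : d < p)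
    (hpα : p < d / α) (hpq : 1 / q = 1 / p - α / d) : 1 < q := by
  have hp1 : 1 < p := hd.trans_lt hp
  have hαd : 0 < α / d := by positivity
  have hq0 : 0 < q := by
    rw [← one_div_pos, hpq, sub_pos, ← one_div_div]
    exact one_div_lt_one_div_of_lt (by positivity) hpα
  refine (div_lt_one hq0).1 ?_
  linarith [(div_lt_one (by positivity)).2 hp1]

variable {E F : Type*} [NormedAddCommGroup E] [NormedSpace ℝ E] [FiniteDimensional ℝ E]
  [Nontrivial E] [MeasurableSpace E] [BorelSpace E] [NormedAddCommGroup F] [NormedSpace ℝ F]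
  [CompleteSpace F] {Ω : E → ℝ} {α s : ℝ}

theorem enorm_integral_roughKernel_smul_sub_le (μ : Measure E) [μ.IsAddHaarMeasure]
    (hΩ : Measurable Ω) (α : ℝ) (hs : finrank ℝ E < s) {f : E → F} (hf : ContDiff ℝ 1 f) (x : E) :
    ‖∫ y, roughKernel Ω (finrank ℝ E + 1 - α) y • (f (x - y) - f x) ∂μ‖ₑ ≤
      (∫⁻ θ : sphere (0 : E) 1, ‖Ω θ‖ₑ ∂μ.toSphere) *
        ENNReal.ofReal (4 * (1 - finrank ℝ E / s)⁻¹) *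
          meanPotential μ α s (fun w => ‖fderiv ℝ f w‖ₑ) x := by
  have hd : (1 : ℝ) ≤ finrank ℝ E := Nat.one_le_cast.2 finrank_pos
  set K := ENNReal.ofReal (4 * (1 - finrank ℝ E / s)⁻¹)
  set A := ballMean μ s (fun w => ‖fderiv ℝ f w‖ₑ) x
  have hA : Measurable A := measurable_ballMean μ s _ x
  calc ‖∫ y, roughKernel Ω (finrank ℝ E + 1 - α) y • (f (x - y) - f x) ∂μ‖ₑ
      ≤ ∫⁻ y, ‖roughKernel Ω (finrank ℝ E + 1 - α) y‖ₑ * (K * (ENNReal.ofReal ‖y‖ * A ‖y‖)) ∂μ := by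
        refine (enorm_integral_le_lintegral_enorm _).trans (lintegral_mono fun y => ?_)
        rw [enorm_smul]
        gcongr
        exact enorm_sub_le_mul_ballMean_fderiv (hd.trans hs.le) hs hf x y
    _ = (∫⁻ θ : sphere (0 : E) 1, ‖Ω θ‖ₑ ∂μ.toSphere) * ∫⁻ r in Ioi (0 : ℝ),
          K * (ENNReal.ofReal r ^ (α - 1) * A r) := by
        rw [lintegral_enorm_roughKernel_mul hΩ (G := fun r => K * (ENNReal.ofReal r * A r))
          (by fun_prop)]
        congr 1
        refine setLIntegral_congr_fun measurableSet_Ioi fun r hr => ?_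
        rw [show α - 1 = finrank ℝ E - 1 - (finrank ℝ E + 1 - α) + 1 by ring,
          ENNReal.rpow_add _ _ (ENNReal.ofReal_pos.2 hr).ne' ENNReal.ofReal_ne_top,
          ENNReal.rpow_one]
        ring
    _ = _ := by rw [lintegral_const_mul _ (by fun_prop), meanPotential, mul_assoc]

theorem exists_lintegral_rpow_roughKernel_smul_sub_le (μ : Measure E) [μ.IsAddHaarMeasure]
    (hΩ : Measurable Ω) (hΩint : Integrable (fun θ : sphere (0 : E) 1 => Ω θ) μ.toSphere)
    {p q lam : ℝ} (hα : 0 < α) (hp : finrank ℝ E < p) (hpα : p < finrank ℝ E / α)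
    (hpq : 1 / q = 1 / p - α / finrank ℝ E) (hlam : α - finrank ℝ E / p < lam)
    (hlam' : lam < 1 - finrank ℝ E / p) :
    ∃ C ≠ ∞, ∀ f : E → F, ContDiff ℝ 1 f →
      (∫⁻ x, (‖x‖ₑ ^ lam *
        ‖∫ y, roughKernel Ω (finrank ℝ E + 1 - α) y • (f (x - y) - f x) ∂μ‖ₑ) ^ q ∂μ) ^ (1 / q) ≤
        C * (∫⁻ w, (‖w‖ₑ ^ lam * ‖fderiv ℝ f w‖ₑ) ^ p ∂μ) ^ (1 / p) := by
  have hd : (1 : ℝ) ≤ finrank ℝ E := Nat.one_le_cast.2 finrank_pos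
  have hd0 : (0 : ℝ) < finrank ℝ E := one_pos.trans_le hd
  have hq : 1 < q := one_lt_of_one_div_eq_sub hd hα hp hpα hpq
  have hq0 : 0 < q := one_pos.trans hq
  have hlamq : 0 < lam + finrank ℝ E / q := by
    rw [div_eq_mul_one_div _ q, hpq, mul_sub, mul_div_cancel₀ _ hd0.ne', mul_one_div]
    linarith
  obtain ⟨s, δ, hds, hsp, hδ, hlamδ⟩ := exists_exponent_between hd0 hp hlam'
  obtain ⟨C, hC, hpotential⟩ := exists_lintegral_rpow_mul_meanPotential_le μ (hd0.trans hds) hsp hα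
    hq hpq hδ hlamδ hlamq
  have hΩfin : ∫⁻ θ : sphere (0 : E) 1, ‖Ω θ‖ₑ ∂μ.toSphere ≠ ∞ := hΩint.2.ne
  set K := (∫⁻ θ : sphere (0 : E) 1, ‖Ω θ‖ₑ ∂μ.toSphere) *
    ENNReal.ofReal (4 * (1 - finrank ℝ E / s)⁻¹)
  have hK : K ≠ ∞ := ENNReal.mul_ne_top hΩfin ENNReal.ofReal_ne_top
  refine ⟨K * C ^ (1 / q), by finiteness, fun f hf => ?_⟩
  calc _ ≤ (∫⁻ x, K ^ q *
          (‖x‖ₑ ^ lam * meanPotential μ α s (fun w => ‖fderiv ℝ f w‖ₑ) x) ^ q ∂μ) ^ (1 / q) := by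
        gcongr with x
        rw [← ENNReal.mul_rpow_of_nonneg _ _ hq0.le, mul_left_comm]
        gcongr
        exact enorm_integral_roughKernel_smul_sub_le μ hΩ α hds hf x
    _ ≤ (K ^ q * (C * (∫⁻ w, (‖w‖ₑ ^ lam * ‖fderiv ℝ f w‖ₑ) ^ p ∂μ) ^ (q / p))) ^ (1 / q) := by
        rw [lintegral_const_mul' _ _ (by finiteness)]
        gcongr
        exact hpotential _ (hf.continuous_fderiv one_ne_zero).enorm.measurable
    _ = _ := by
        simp_rw [ENNReal.mul_rpow_of_nonneg _ _ (by positivity : 0 ≤ 1 / q), ← ENNReal.rpow_mul]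
        rw [mul_one_div_cancel hq0.ne', ENNReal.rpow_one, mul_assoc K,
          show q / p * (1 / q) = 1 / p by field_simp]

end RoughSobolev

section EuclideanSpace

open Module

theorem lintegral_ofReal_norm_rpow_mul {E F : Type*} [NormedAddCommGroup E] [MeasurableSpace E]
    (μ : Measure E) [NullSingletonClass μ] [NormedAddCommGroup F] (lam p : ℝ) (u : E → F) :
    ∫⁻ x, ENNReal.ofReal (‖x‖ ^ lam * ‖u x‖) ^ p ∂μ = ∫⁻ x, (‖x‖ₑ ^ lam * ‖u x‖ₑ) ^ p ∂μ := by
  refine lintegral_congr_ae ((Measure.ae_ne μ 0).mono fun x hx => ?_)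
  simp only [ENNReal.ofReal_mul (Real.rpow_nonneg (norm_nonneg x) lam),
    ← ENNReal.ofReal_rpow_of_pos (norm_pos_iff.2 hx), ofReal_norm]

theorem gradNorm_eq_norm_fderiv {n : ℕ} (f : Rn n → ℝ) (x : Rn n) :
    gradNorm f x = ‖fderiv ℝ f x‖ :=
  LinearIsometryEquiv.norm_map _ _

variable {n : ℕ} [NeZero n] {Ω : Rn n → ℝ}

theorem exists_map_coe_toSphere_eq_smul_sphereMeasure (n : ℕ) [NeZero n] : ∃ c : ℝ≥0∞, c ≠ ∞ ∧
    (volume : Measure (Rn n)).toSphere.map Subtype.val = c • sphereMeasure n := by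
  simpa only [finrank_euclideanSpace_fin, sphereMeasure] using
    exists_map_coe_toSphere_eq_smul_hausdorffMeasure (E := Rn n)

theorem integrable_toSphere_of_sphereMeasure (hΩ : Integrable Ω (sphereMeasure n)) :
    Integrable (fun θ : sphere (0 : Rn n) 1 => Ω θ) (volume : Measure (Rn n)).toSphere := by
  obtain ⟨c, hc, hmap⟩ := exists_map_coe_toSphere_eq_smul_sphereMeasure n
  refine (MeasurableEmbedding.subtype_coe isClosed_sphere.measurableSet).integrable_map_iff.1 ?_
  rw [hmap]
  exact hΩ.smul_measure hc

theorem integral_toSphere_eq_zero_of_sphereMeasure (hΩ : ∫ y, Ω y ∂sphereMeasure n = 0) :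
    ∫ θ : sphere (0 : Rn n) 1, Ω θ ∂(volume : Measure (Rn n)).toSphere = 0 := by
  obtain ⟨c, -, hmap⟩ := exists_map_coe_toSphere_eq_smul_sphereMeasure n
  rw [← (MeasurableEmbedding.subtype_coe isClosed_sphere.measurableSet).integral_map, hmap,
    integral_smul_measure, hΩ, smul_zero]

theorem roughOp_eq_integral {α : ℝ} (hα0 : 0 < α) (hα1 : α < 1) (hΩ : Measurable Ω)
    (hΩint : Integrable Ω (sphereMeasure n)) (hΩmean : ∫ y, Ω y ∂sphereMeasure n = 0)
    {f : Rn n → ℝ} (hf : ContDiff ℝ 1 f) (hfc : HasCompactSupport f) (x : Rn n) :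
    roughOp n α Ω f x =
      ∫ y, roughKernel Ω (finrank ℝ (Rn n) + 1 - α) y • (f (x - y) - f x) := by
  obtain ⟨K, hK⟩ := hf.lipschitzWith_of_hasCompactSupport hfc one_ne_zero
  obtain ⟨B, hB⟩ := hf.continuous.bounded_above_of_compact_support hfc
  have hlim := tendsto_setIntegral_roughKernel_smul hΩ (integrable_toSphere_of_sphereMeasure hΩint)
    (integral_toSphere_eq_zero_of_sphereMeasure hΩmean) (β := finrank ℝ (Rn n) + 1 - α)
    (by linarith) (by linarith) hK hB x
  refine Tendsto.limUnder_eq (hlim.congr fun ε => ?_)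
  simp only [roughOpTrunc, roughKernel, smul_eq_mul, finrank_euclideanSpace_fin]

theorem statement8_general (n : ℕ) (α : ℝ) (hα0 : 0 < α)
    (Ω : Rn n → ℝ) (hΩmeas : Measurable Ω) (hΩint : Integrable Ω (sphereMeasure n))
    (hΩmean : ∫ y, Ω y ∂sphereMeasure n = 0)
    (p q lam : ℝ) (hp1 : (n : ℝ) < p) (hp2 : p < n / α)
    (hq : 1 / q = 1 / p - α / n)
    (hlam1 : α - n / p < lam) (hlam2 : lam < 1 - n / p) :
    ∃ C > (0 : ℝ), ∀ f : Rn n → ℝ, ContDiff ℝ 1 f → HasCompactSupport f →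
      (∫⁻ x : Rn n, ENNReal.ofReal (‖x‖ ^ lam * |roughOp n α Ω f x|) ^ q) ^ (1 / q) ≤
        ENNReal.ofReal C *
          (∫⁻ x : Rn n, ENNReal.ofReal (‖x‖ ^ lam * gradNorm f x) ^ p) ^ (1 / p) := by
  have : NeZero n := by
    refine ⟨fun hn => ?_⟩
    rw [hn, Nat.cast_zero] at hp1
    rw [hn, Nat.cast_zero, zero_div] at hp2
    exact hp1.not_gt hp2
  have hα1 : α < 1 := by
    have := (lt_div_iff₀ hα0).1 (hp1.trans hp2)
    exact (mul_lt_iff_lt_one_right (Nat.cast_pos.2 (NeZero.pos n))).1 this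
  obtain ⟨C, hC, hSobolev⟩ := exists_lintegral_rpow_roughKernel_smul_sub_le (F := ℝ) volume hΩmeas
    (integrable_toSphere_of_sphereMeasure hΩint) hα0 (p := p) (q := q) (lam := lam)
    (by simpa) (by simpa) (by simpa using hq) (by simpa) (by simpa)
  refine ⟨C.toReal + 1, by positivity, fun f hf hfc => ?_⟩
  simp only [← Real.norm_eq_abs, gradNorm_eq_norm_fderiv, lintegral_ofReal_norm_rpow_mul,
    roughOp_eq_integral hα0 hα1 hΩmeas hΩint hΩmean hf hfc]
  refine (hSobolev f hf).trans (mul_le_mul_left ?_ _)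
  exact ENNReal.le_ofReal_iff_toReal_le hC (by positivity) |>.2 (by linarith)

end EuclideanSpace

/-- Power-weighted Sobolev inequality for the hypersingular rough integral
`T_{Ω,α}`, `0 < α < 1`, `Ω ∈ L(log L)^{1/n'}(𝕊^{n-1})` of mean zero. -/
theorem statement8 (n : ℕ) (hn : 2 ≤ n) (α : ℝ) (hα0 : 0 < α) (hα1 : α < 1)
    (Ω : Rn n → ℝ) (hΩmeas : Measurable Ω) (hΩorl : (orliczSet n Ω).Nonempty)
    (hΩint : Integrable Ω (sphereMeasure n))
    (hΩmean : ∫ y, Ω y ∂sphereMeasure n = 0)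
    (p q lam : ℝ) (hp1 : (n : ℝ) < p) (hp2 : p < n / α)
    (hq : 1 / q = 1 / p - α / n)
    (hlam1 : α - n / p < lam) (hlam2 : lam < 1 - n / p) :
    ∃ C > (0 : ℝ), ∀ f : Rn n → ℝ, IsCcSmooth f →
      (∫⁻ x : Rn n, ENNReal.ofReal (‖x‖ ^ lam * |roughOp n α Ω f x|) ^ q) ^ (1 / q) ≤
        ENNReal.ofReal C *
          (∫⁻ x : Rn n, ENNReal.ofReal (‖x‖ ^ lam * gradNorm f x) ^ p) ^ (1 / p) := by
  obtain ⟨C, hC, hSobolev⟩ := statement8_general n α hα0 Ω hΩmeas hΩint hΩmean p q lam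
    hp1 hp2 hq hlam1 hlam2
  exact ⟨C, hC, fun f hf => hSobolev f (hf.1.of_le (by simp)) hf.2⟩

end
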